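/- arXiv:2410.09697 — 7 statements merged into one kernel-verified Lean document; each statement's English description precedes it below -/
import Mathlib

section
/- Let m ≥ 10 and a ∈ ( √(2 log 2)/m, 1 ], and let π(x) = (1 − e^{−a²m²/2}) g_m(x) + e^{−a²m²/2} u_m(x), where g_m(x) = (2π)^{−1/2} e^{−(x−m)²/2} and u_m(x) = e^{−d(x,[−m,2m])²/2} / (3m + √(2π)). Then π satisfies a log-Sobolev inequality with constant 81 a² m⁵ / (1 − 2 e^{−a²m²/2}): for every smooth compactly supported f : ℝ → ℝ, ∫ f² log( f² / ∫ f² π dx ) π dx ≤ 2 · (81 a² m⁵ / (1 − 2 e^{−a²m²/2})) · ∫ (f′)² π dx. -/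
open MeasureTheory Real

/-- The density of N(m, 1). -/
noncomputable def gaussAt (m x : ℝ) : ℝ := Real.exp (-(x - m) ^ 2 / 2) / Real.sqrt (2 * Real.pi)

/-- The smoothed uniform density on [−m, 2m]. -/
noncomputable def smUnif (m x : ℝ) : ℝ :=
  Real.exp (-(Metric.infDist x (Set.Icc (-m) (2 * m))) ^ 2 / 2) / (3 * m + Real.sqrt (2 * Real.pi))

/-- The general unimodal target π = (1 − e^{−a²m²/2}) N(m,1) + e^{−a²m²/2} u_m. -/
noncomputable def piDensA (m a x : ℝ) : ℝ :=
  (1 - Real.exp (-(a ^ 2 * m ^ 2) / 2)) * gaussAt m x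
    + Real.exp (-(a ^ 2 * m ^ 2) / 2) * smUnif m x


noncomputable def dl (A B x : ℝ) : ℝ := max (x - B) 0 - max (A - x) 0
noncomputable def qq (A B x : ℝ) : ℝ := Real.exp (-(dl A B x) ^ 2 / 2)

lemma dl_cont (A B : ℝ) : Continuous (dl A B) := by unfold dl; fun_prop
lemma qq_cont (A B : ℝ) : Continuous (qq A B) := by
  have := dl_cont A B
  unfold qq; fun_prop

lemma qq_pos (A B x : ℝ) : 0 < qq A B x := Real.exp_pos _
lemma qq_le_one (A B x : ℝ) : qq A B x ≤ 1 := by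
  unfold qq; rw [Real.exp_le_one_iff]; nlinarith [sq_nonneg (dl A B x)]

/-- Three cases for the signed distance. -/
lemma dl_cases {A B : ℝ} (h : A ≤ B) (x : ℝ) :
    (x ≤ A ∧ dl A B x = x - A) ∨ (A ≤ x ∧ x ≤ B ∧ dl A B x = 0) ∨ (B ≤ x ∧ dl A B x = x - B) := by
  unfold dl
  rcases le_total x A with h1 | h1
  · left
    rw [max_eq_right (by linarith), max_eq_left (by linarith)]
    exact ⟨h1, by ring⟩
  · rcases le_total x B with h2 | h2
    · right; left
      rw [max_eq_right (by linarith), max_eq_right (by linarith)]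
      exact ⟨h1, h2, by ring⟩
    · right; right
      rw [max_eq_left (by linarith), max_eq_right (by linarith)]
      exact ⟨h2, by ring⟩

lemma dl_abs_bound {A B c : ℝ} (h1 : A ≤ c) (h2 : c ≤ B) (x : ℝ) :
    |x - c| ≤ (B - A) + |dl A B x| := by
  rcases dl_cases (h1.trans h2) x with ⟨h, e⟩ | ⟨h, h', e⟩ | ⟨h, e⟩ <;> rw [e]
  · rw [abs_of_nonpos (by linarith), abs_of_nonpos (by linarith)]; linarith
  · rw [abs_zero, abs_le]; constructor <;> linarith
  · rw [abs_of_nonneg (by linarith), abs_of_nonneg (by linarith)]; linarith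

lemma dl_sq_le {A B c : ℝ} (h1 : A ≤ c) (h2 : c ≤ B) (x : ℝ) :
    dl A B x ^ 2 ≤ (x - c) * dl A B x := by
  rcases dl_cases (h1.trans h2) x with ⟨h, e⟩ | ⟨h, h', e⟩ | ⟨h, e⟩ <;> rw [e]
  · nlinarith
  · simp
  · nlinarith

lemma dl_sq_le_sub {A B c : ℝ} (h1 : A ≤ c) (h2 : c ≤ B) (x : ℝ) :
    dl A B x ^ 2 ≤ (x - c) ^ 2 := by
  rcases dl_cases (h1.trans h2) x with ⟨h, e⟩ | ⟨h, h', e⟩ | ⟨h, e⟩ <;> rw [e]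
  · nlinarith
  · simpa using sq_nonneg (x - c)
  · nlinarith

lemma dl_mono_right {A B c x y : ℝ} (h1 : A ≤ c) (h2 : c ≤ B) (hy : c ≤ y) (hx : y ≤ x) :
    dl A B y ^ 2 ≤ dl A B x ^ 2 := by
  rcases dl_cases (h1.trans h2) x with ⟨h, e⟩ | ⟨h, h', e⟩ | ⟨h, e⟩ <;>
  rcases dl_cases (h1.trans h2) y with ⟨h3, e'⟩ | ⟨h3, h3', e'⟩ | ⟨h3, e'⟩ <;> rw [e, e'] <;> nlinarith

lemma dl_mono_left {A B c x y : ℝ} (h1 : A ≤ c) (h2 : c ≤ B) (hy : y ≤ c) (hx : x ≤ y) :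
    dl A B y ^ 2 ≤ dl A B x ^ 2 := by
  rcases dl_cases (h1.trans h2) x with ⟨h, e⟩ | ⟨h, h', e⟩ | ⟨h, e⟩ <;>
  rcases dl_cases (h1.trans h2) y with ⟨h3, e'⟩ | ⟨h3, h3', e'⟩ | ⟨h3, e'⟩ <;> rw [e, e'] <;> nlinarith

lemma infDist_sq {A B : ℝ} (h : A ≤ B) (x : ℝ) :
    Metric.infDist x (Set.Icc A B) ^ 2 = dl A B x ^ 2 := by
  have hne : (Set.Icc A B).Nonempty := Set.nonempty_Icc.2 h
  rcases dl_cases h x with ⟨h1, e⟩ | ⟨h1, h', e⟩ | ⟨h1, e⟩ <;> rw [e]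
  · have : Metric.infDist x (Set.Icc A B) = A - x := by
      apply le_antisymm
      · have := Metric.infDist_le_dist_of_mem (x := x) (Set.left_mem_Icc.2 h)
        rwa [Real.dist_eq, abs_of_nonpos (by linarith), neg_sub] at this
      · rw [Metric.le_infDist hne]
        intro y hy
        rw [Real.dist_eq, abs_of_nonpos (by linarith [hy.1])]; linarith [hy.1]
    rw [this]; ring
  · rw [Metric.infDist_zero_of_mem (show x ∈ Set.Icc A B from ⟨h1, h'⟩)]
  · have : Metric.infDist x (Set.Icc A B) = x - B := by
      apply le_antisymm
      · have := Metric.infDist_le_dist_of_mem (x := x) (Set.right_mem_Icc.2 h)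
        rwa [Real.dist_eq, abs_of_nonneg (by linarith)] at this
      · rw [Metric.le_infDist hne]
        intro y hy
        rw [Real.dist_eq, abs_of_nonneg (by linarith [hy.2])]; linarith [hy.2]
    rw [this]

lemma hasDerivAt_max_sq (y : ℝ) : HasDerivAt (fun y : ℝ => max y 0 ^ 2) (2 * max y 0) y := by
  rcases lt_trichotomy y 0 with h | h | h
  · rw [max_eq_right h.le, mul_zero]
    apply (hasDerivAt_const y (0:ℝ)).congr_of_eventuallyEq
    filter_upwards [gt_mem_nhds h] with z hz
    simp [max_eq_right (le_of_lt hz)]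
  · subst h
    rw [hasDerivAt_iff_isLittleO]
    simp only [max_self, mul_zero, sub_zero, smul_eq_mul, ne_eq, OfNat.ofNat_ne_zero,
      not_false_eq_true, zero_pow]
    have h2 : (fun x : ℝ => x ^ 2) =o[nhds 0] fun x => x := by
      simpa using Asymptotics.isLittleO_pow_pow (𝕜 := ℝ) (m := 1) (n := 2) (by norm_num)
    refine Asymptotics.IsBigO.trans_isLittleO ?_ h2
    refine Asymptotics.IsBigO.of_bound 1 (Filter.Eventually.of_forall fun x => ?_)
    rw [one_mul, Real.norm_of_nonneg (by positivity), Real.norm_of_nonneg (by positivity)]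
    rcases le_total x 0 with h | h
    · rw [max_eq_right h]; nlinarith
    · rw [max_eq_left h]
  · rw [max_eq_left h.le]
    have h3 : HasDerivAt (fun y : ℝ => y ^ 2) (2 * y) y := by simpa using hasDerivAt_pow 2 y
    apply h3.congr_of_eventuallyEq
    filter_upwards [lt_mem_nhds h] with z hz
    rw [max_eq_left (le_of_lt hz)]

lemma qq_deriv {A B : ℝ} (h : A ≤ B) (x : ℝ) :
    HasDerivAt (qq A B) (-(dl A B x) * qq A B x) x := by
  have e : ∀ x, dl A B x ^ 2 = max (x - B) 0 ^ 2 + max (A - x) 0 ^ 2 := by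
    intro x
    unfold dl
    rcases le_total x A with h1 | h1
    · rw [max_eq_right (a := x - B) (by linarith)]; ring
    · rw [max_eq_right (a := A - x) (by linarith)]; ring
  have h1 : HasDerivAt (fun x => dl A B x ^ 2) (2 * dl A B x) x := by
    have a1 := (hasDerivAt_max_sq (x - B)).comp x ((hasDerivAt_id x).sub_const B)
    have a2 := (hasDerivAt_max_sq (A - x)).comp x ((hasDerivAt_id x).const_sub A)
    have a3 := a1.add a2
    refine (a3.congr_deriv ?_).congr_of_eventuallyEq (Filter.Eventually.of_forall fun y => ?_)
    · unfold dl; ring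
    · simpa using e y
  have h2 := ((h1.neg).div_const 2).exp
  exact h2.congr_deriv (by simp only [qq, Pi.neg_apply]; ring)

lemma qq_growth {A B : ℝ} (h : A ≤ B) : ∃ M : ℝ, 0 ≤ M ∧ ∀ x, (1 + x ^ 2) * qq A B x ≤ M * Real.exp (-(1/8) * x ^ 2) := by
  refine ⟨8 * Real.exp ((|A| + (B - A)) ^ 2 / 2), by positivity, fun x => ?_⟩
  have h1 := dl_abs_bound le_rfl h x
  have h2 : |x| ≤ (|A| + (B - A)) + |dl A B x| := by
    have : |x| ≤ |x - A| + |A| := by simpa using abs_add_le (x - A) A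
    linarith
  have h3 : x ^ 2 ≤ 2 * (|A| + (B - A)) ^ 2 + 2 * dl A B x ^ 2 := by
    have h4 : x ^ 2 ≤ ((|A| + (B - A)) + |dl A B x|) ^ 2 := by
      rw [← sq_abs x]; exact pow_le_pow_left₀ (abs_nonneg _) h2 2
    rw [← sq_abs (dl A B x)]
    nlinarith [sq_nonneg ((|A| + (B - A)) - |dl A B x|)]
  have h4 : 1 + x ^ 2 ≤ 8 * Real.exp (1/8 * x ^ 2) := by
    have := Real.add_one_le_exp (1/8 * x^2)
    linarith
  calc (1 + x ^ 2) * qq A B x ≤ 8 * Real.exp (1/8 * x ^ 2) * qq A B x :=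
        mul_le_mul_of_nonneg_right h4 (qq_pos _ _ _).le
    _ = 8 * Real.exp (1/8 * x ^ 2 + -(dl A B x) ^ 2 / 2) := by
        unfold qq; rw [Real.exp_add]; ring
    _ ≤ 8 * Real.exp ((|A| + (B - A)) ^ 2 / 2 + -(1/8) * x ^ 2) := by
        gcongr 8 * Real.exp ?_
        linarith
    _ = _ := by rw [Real.exp_add]; ring

lemma qq_int {A B : ℝ} (h : A ≤ B) {u : ℝ → ℝ} (hu : Continuous u) {M : ℝ}
    (hb : ∀ x, |u x| ≤ M * (1 + x ^ 2)) : Integrable (fun x => u x * qq A B x) := by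
  obtain ⟨K, hK, hq⟩ := qq_growth h
  have hM : 0 ≤ M := by
    have := (abs_nonneg _).trans (hb 0); simpa using this
  refine ((integrable_exp_neg_mul_sq (b := 1/8) (by norm_num)).const_mul (M * K)).mono'
    (hu.mul (qq_cont A B)).aestronglyMeasurable (Filter.Eventually.of_forall fun x => ?_)
  rw [Real.norm_eq_abs, abs_mul, abs_of_pos (qq_pos A B x)]
  calc |u x| * qq A B x ≤ M * (1 + x ^ 2) * qq A B x :=
        mul_le_mul_of_nonneg_right (hb x) (qq_pos _ _ _).le
    _ = M * ((1 + x ^ 2) * qq A B x) := by ring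
    _ ≤ M * (K * Real.exp (-(1/8) * x ^ 2)) := mul_le_mul_of_nonneg_left (hq x) hM
    _ = _ := by ring

lemma ibp {A B c : ℝ} (h1 : A ≤ c) (h2 : c ≤ B) {g g' : ℝ → ℝ} (hg : ∀ x, HasDerivAt g (g' x) x)
    (hg' : Continuous g') {M : ℝ} (hM : ∀ x, |g x| ≤ M) (hM' : ∀ x, |g' x| ≤ M) :
    Integrable (fun x => (g x ^ 2 * (1 - (x - c) * dl A B x) + 2 * g x * g' x * (x - c)) * qq A B x) ∧
    ∫ x, (g x ^ 2 * (1 - (x - c) * dl A B x) + 2 * g x * g' x * (x - c)) * qq A B x = 0 := by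
  have hgc : Continuous g := continuous_iff_continuousAt.2 fun x => (hg x).continuousAt
  have hdc := dl_cont A B
  have hM0 : 0 ≤ M := (abs_nonneg _).trans (hM 0)
  have hxc : ∀ x : ℝ, |x - c| ≤ (1 + |c|) * (1 + x ^ 2) := by
    intro x
    have e1 := abs_sub x c
    have e2 : |x| ≤ 1 + x ^ 2 := by rw [← sq_abs]; nlinarith [sq_nonneg (|x| - 1), abs_nonneg x]
    nlinarith [abs_nonneg c, sq_nonneg x, mul_nonneg (abs_nonneg c) (sq_nonneg x)]
  have hxd : ∀ x : ℝ, |1 - (x - c) * dl A B x| ≤ (1 + 2 * (1 + c ^ 2)) * (1 + x ^ 2) := by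
    intro x
    have e0 : |dl A B x| ≤ |x - c| := sq_le_sq.1 (dl_sq_le_sub h1 h2 x)
    have e1 : |1 - (x - c) * dl A B x| ≤ 1 + |x - c| * |dl A B x| := by
      rw [← abs_mul]; simpa using abs_sub 1 ((x - c) * dl A B x)
    have e2 : |x - c| * |dl A B x| ≤ (x - c) ^ 2 := by
      rw [← sq_abs (x - c)]; nlinarith [abs_nonneg (x - c)]
    nlinarith [sq_nonneg (x + c), sq_nonneg (x * c), sq_nonneg x, sq_nonneg c]
  have hsq : ∀ x, g x ^ 2 ≤ M ^ 2 := fun x => by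
    rw [← sq_abs]; exact pow_le_pow_left₀ (abs_nonneg _) (hM x) 2
  have hint : Integrable (fun x => (g x ^ 2 * (1 - (x - c) * dl A B x) + 2 * g x * g' x * (x - c)) * qq A B x) := by
    refine qq_int (M := M ^ 2 * (1 + 2 * (1 + c ^ 2)) + 2 * M * M * (1 + |c|)) (h1.trans h2) (by fun_prop) fun x => ?_
    refine (abs_add_le _ _).trans ?_
    rw [add_mul]
    apply add_le_add
    · rw [abs_mul, abs_of_nonneg (sq_nonneg (g x)), mul_assoc]
      exact mul_le_mul (hsq x) (hxd x) (abs_nonneg _) (by positivity)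
    · rw [abs_mul, abs_mul, abs_mul, abs_two, mul_assoc (2 * M * M)]
      have := hM x
      have := hM' x
      have := hxc x
      gcongr
  refine ⟨hint, integral_eq_zero_of_hasDerivAt_of_integrable (f := fun x => (g x ^ 2 * (x - c)) * qq A B x) ?_ hint ?_⟩
  · intro x
    have d1 := (((hg x).pow 2).mul ((hasDerivAt_id x).sub_const c)).mul (qq_deriv (h1.trans h2) x)
    refine d1.congr_deriv ?_
    simp only [Pi.mul_apply, Pi.pow_apply, id]
    push_cast
    ring
  · refine qq_int (M := M ^ 2 * (1 + |c|)) (h1.trans h2) (by fun_prop) fun x => ?_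
    rw [abs_mul, abs_of_nonneg (sq_nonneg (g x)), mul_assoc]
    exact mul_le_mul (hsq x) (hxc x) (abs_nonneg _) (by positivity)

lemma cs_interval {g g' : ℝ → ℝ} (hg : ∀ x, HasDerivAt g (g' x) x) (hg' : Continuous g')
    {a b : ℝ} (hab : a ≤ b) : (g b - g a) ^ 2 ≤ (b - a) * ∫ x in a..b, g' x ^ 2 := by
  rcases hab.eq_or_lt with rfl | hab'
  · simp
  have hF : ∫ x in a..b, g' x = g b - g a :=
    intervalIntegral.integral_eq_sub_of_hasDerivAt (fun x _ => hg x) (hg'.intervalIntegrable _ _)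
  set t := (g b - g a) / (b - a) with ht
  have h0 : 0 ≤ ∫ x in a..b, (g' x - t) ^ 2 :=
    intervalIntegral.integral_nonneg hab fun x _ => sq_nonneg _
  have h1 : ∫ x in a..b, (g' x - t) ^ 2 = (∫ x in a..b, g' x ^ 2) - 2 * t * (g b - g a) + t ^ 2 * (b - a) := by
    have : ∀ x, (g' x - t) ^ 2 = g' x ^ 2 - 2 * t * g' x + t ^ 2 := fun x => by ring
    simp_rw [this]
    rw [intervalIntegral.integral_add, intervalIntegral.integral_sub,
      intervalIntegral.integral_const_mul, hF, intervalIntegral.integral_const, smul_eq_mul]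
    · ring
    all_goals apply Continuous.intervalIntegrable; fun_prop
  have hpos : 0 < b - a := by linarith
  have h2 : t * (b - a) = g b - g a := by rw [ht]; field_simp
  rw [h1] at h0
  nlinarith [mul_nonneg hpos.le h0]

lemma ptwise {A B c : ℝ} (h1 : A ≤ c) (h2 : c ≤ B) {g g' : ℝ → ℝ} (hg : ∀ x, HasDerivAt g (g' x) x)
    (hg' : Continuous g') (hi : Integrable (fun x => g' x ^ 2 * qq A B x)) (hc : g c = 0) (x : ℝ) :
    g x ^ 2 * qq A B x ≤ |x - c| * ∫ y, g' y ^ 2 * qq A B y := by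
  have key : ∀ a b, a ≤ b → (∀ y ∈ Set.Icc a b, dl A B y ^ 2 ≤ dl A B x ^ 2) →
      (∫ y in a..b, g' y ^ 2) * qq A B x ≤ ∫ y, g' y ^ 2 * qq A B y := by
    intro a b hab hy
    have hqc := qq_cont A B
    rw [← intervalIntegral.integral_mul_const]
    calc ∫ y in a..b, g' y ^ 2 * qq A B x ≤ ∫ y in a..b, g' y ^ 2 * qq A B y := by
          apply intervalIntegral.integral_mono_on hab
          · apply Continuous.intervalIntegrable; fun_prop
          · apply Continuous.intervalIntegrable; fun_prop
          · intro y hyy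
            apply mul_le_mul_of_nonneg_left _ (sq_nonneg _)
            unfold qq
            apply Real.exp_le_exp.2
            have := hy y hyy
            linarith
      _ = ∫ y in Set.Ioc a b, g' y ^ 2 * qq A B y := intervalIntegral.integral_of_le hab
      _ ≤ _ := setIntegral_le_integral hi (Filter.Eventually.of_forall fun y =>
            mul_nonneg (sq_nonneg _) (qq_pos _ _ _).le)
  rcases le_total c x with h | h
  · have e1 := cs_interval hg hg' h
    have e2 := key c x h fun y hy => dl_mono_right h1 h2 hy.1 hy.2
    rw [abs_of_nonneg (by linarith)]
    rw [hc, sub_zero] at e1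
    have := mul_le_mul_of_nonneg_right e1 (qq_pos A B x).le
    have := mul_le_mul_of_nonneg_left e2 (sub_nonneg.2 h)
    linarith
  · have e1 := cs_interval hg hg' h
    have e2 := key x c h fun y hy => dl_mono_left h1 h2 hy.2 hy.1
    rw [abs_of_nonpos (by linarith)]
    rw [hc, zero_sub, neg_sq] at e1
    have := mul_le_mul_of_nonneg_right e1 (qq_pos A B x).le
    have := mul_le_mul_of_nonneg_left e2 (sub_nonneg.2 h)
    linarith

lemma hardy {A B c m : ℝ} (h1 : A ≤ c) (h2 : c ≤ B) (hL : B - A ≤ 3 * m) (hm : 10 ≤ m)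
    {g g' : ℝ → ℝ} (hg : ∀ x, HasDerivAt g (g' x) x)
    (hg' : Continuous g') {M : ℝ} (hM : ∀ x, |g x| ≤ M) (hM' : ∀ x, |g' x| ≤ M) (hc : g c = 0) :
    (∫ x, g x ^ 2 * qq A B x) ≤ 26 * m ^ 2 * ∫ x, g' x ^ 2 * qq A B x ∧
    (∫ x, (g x ^ 2 * dl A B x ^ 2) * qq A B x) ≤ 119 * m ^ 2 * ∫ x, g' x ^ 2 * qq A B x := by
  have hAB := h1.trans h2
  have hgc : Continuous g := continuous_iff_continuousAt.2 fun x => (hg x).continuousAt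
  have hdc := dl_cont A B
  have hsq : ∀ x, g x ^ 2 ≤ M ^ 2 := fun x => by
    rw [← sq_abs]; exact pow_le_pow_left₀ (abs_nonneg _) (hM x) 2
  have hsq' : ∀ x, g' x ^ 2 ≤ M ^ 2 := fun x => by
    rw [← sq_abs]; exact pow_le_pow_left₀ (abs_nonneg _) (hM' x) 2
  have hdb : ∀ x, dl A B x ^ 2 ≤ 2 * (1 + c ^ 2) * (1 + x ^ 2) := fun x => by
    have := dl_sq_le_sub h1 h2 x
    nlinarith [sq_nonneg (x + c), sq_nonneg (x * c), sq_nonneg x, sq_nonneg c]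
  have iI : Integrable (fun x => g x ^ 2 * qq A B x) :=
    qq_int hAB (M := M ^ 2) (by fun_prop) fun x => by
      rw [abs_of_nonneg (sq_nonneg _)]
      nlinarith [hsq x, sq_nonneg x, sq_nonneg M, mul_nonneg (sq_nonneg M) (sq_nonneg x)]
  have iE : Integrable (fun x => g' x ^ 2 * qq A B x) :=
    qq_int hAB (M := M ^ 2) (by fun_prop) fun x => by
      rw [abs_of_nonneg (sq_nonneg _)]
      nlinarith [hsq' x, sq_nonneg x, sq_nonneg M, mul_nonneg (sq_nonneg M) (sq_nonneg x)]
  have iY : Integrable (fun x => (g x ^ 2 * dl A B x ^ 2) * qq A B x) :=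
    qq_int hAB (M := M ^ 2 * (2 * (1 + c ^ 2))) (by fun_prop) fun x => by
      rw [abs_of_nonneg (by positivity), mul_assoc]
      exact mul_le_mul (hsq x) (hdb x) (sq_nonneg _) (sq_nonneg _)
  have pw := ptwise h1 h2 hg hg' iE hc
  obtain ⟨hint2, hib⟩ := ibp h1 h2 hg hg' hM hM'
  set E := ∫ x, g' x ^ 2 * qq A B x with hE
  set I := ∫ x, g x ^ 2 * qq A B x with hI
  set Y := ∫ x, (g x ^ 2 * dl A B x ^ 2) * qq A B x with hY
  have hE0 : 0 ≤ E := integral_nonneg fun x => mul_nonneg (sq_nonneg _) (qq_pos _ _ _).le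
  have hY0 : 0 ≤ Y := integral_nonneg fun x => mul_nonneg (by positivity) (qq_pos _ _ _).le
  set L := B - A with hLdef
  have hL0 : 0 ≤ L := by linarith
  -- first inequality
  have ineq1 : 0 ≤ 2 * I + (2 + L ^ 2) * E - (1/2) * Y := by
    have hint : Integrable (fun x => 2 * (g x ^ 2 * qq A B x) + (2 + L ^ 2) * (g' x ^ 2 * qq A B x)
        - (1/2) * ((g x ^ 2 * dl A B x ^ 2) * qq A B x)) :=
      ((iI.const_mul 2).add (iE.const_mul _)).sub (iY.const_mul _)
    have hval : ∫ x, (2 * (g x ^ 2 * qq A B x) + (2 + L ^ 2) * (g' x ^ 2 * qq A B x)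
        - (1/2) * ((g x ^ 2 * dl A B x ^ 2) * qq A B x)) = 2 * I + (2 + L ^ 2) * E - (1/2) * Y := by
      have h12 : Integrable (fun x => 2 * (g x ^ 2 * qq A B x) + (2 + L ^ 2) * (g' x ^ 2 * qq A B x)) :=
        (iI.const_mul 2).add (iE.const_mul _)
      rw [integral_sub h12 (iY.const_mul _),
        integral_add (iI.const_mul 2) (iE.const_mul _), integral_const_mul, integral_const_mul,
        integral_const_mul]
    rw [← hval, ← hib]
    apply integral_mono hint2 hint
    intro x
    have hq := (qq_pos A B x).le
    suffices hh : g x ^ 2 * (1 - (x - c) * dl A B x) + 2 * g x * g' x * (x - c) ≤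
        2 * g x ^ 2 + (2 + L ^ 2) * g' x ^ 2 - (1/2) * (g x ^ 2 * dl A B x ^ 2) by
      have := mul_le_mul_of_nonneg_right hh hq
      simp only
      linarith
    have e1 := dl_sq_le h1 h2 x
    have e2 := dl_abs_bound h1 h2 x
    have e3 : 2 * g x * g' x * (x - c) ≤ 2 * (|g x| * |g' x|) * (L + |dl A B x|) := by
      calc 2 * g x * g' x * (x - c) ≤ |2 * g x * g' x * (x - c)| := le_abs_self _
        _ = 2 * (|g x| * |g' x|) * |x - c| := by simp only [abs_mul, abs_two]; ring
        _ ≤ _ := by gcongr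
    have e4 : 2 * (|g x| * |g' x|) * L ≤ g x ^ 2 + L ^ 2 * g' x ^ 2 := by
      rw [← sq_abs (g x), ← sq_abs (g' x)]
      nlinarith [sq_nonneg (|g x| - L * |g' x|)]
    have e5 : 2 * (|g x| * |g' x|) * |dl A B x| ≤ (1/2) * (g x ^ 2 * dl A B x ^ 2) + 2 * g' x ^ 2 := by
      rw [← sq_abs (g x), ← sq_abs (g' x), ← sq_abs (dl A B x)]
      nlinarith [sq_nonneg (|g x| * |dl A B x| - 2 * |g' x|)]
    have e6 := mul_le_mul_of_nonneg_left e1 (sq_nonneg (g x))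
    nlinarith
  have ineq2 : I ≤ (L + 6) * (L + 3) * E + Y / 9 := by
    have hJi : Integrable ((Set.Icc (A - 3) (B + 3)).indicator (fun _ => (L + 3) * E)) := by
      rw [integrable_indicator_iff measurableSet_Icc]
      exact integrableOn_const (by simp)
    have hJ : ∫ x, (Set.Icc (A - 3) (B + 3)).indicator (fun _ => (L + 3) * E) x = (L + 6) * (L + 3) * E := by
      rw [integral_indicator measurableSet_Icc, setIntegral_const, smul_eq_mul, Measure.real,
        Real.volume_Icc, ENNReal.toReal_ofReal (by linarith)]
      rw [hLdef]; ring
    rw [← hJ, div_eq_mul_inv, hY, ← integral_mul_const, ← integral_add hJi (iY.mul_const _)]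
    apply integral_mono iI (hJi.add (iY.mul_const _))
    intro x
    have hq := (qq_pos A B x).le
    simp only [Pi.add_apply]
    by_cases hx : x ∈ Set.Icc (A - 3) (B + 3)
    · rw [Set.indicator_of_mem hx]
      have e2 : |x - c| ≤ L + 3 := by
        rw [abs_le]; constructor <;> linarith [hx.1, hx.2]
      have e3 := mul_le_mul_of_nonneg_right e2 hE0
      have : 0 ≤ g x ^ 2 * dl A B x ^ 2 * qq A B x * 9⁻¹ := by positivity
      linarith [pw x]
    · rw [Set.indicator_of_notMem hx, zero_add]
      have e4 : 9 ≤ dl A B x ^ 2 := by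
        rcases dl_cases hAB x with ⟨h, e⟩ | ⟨h, h', e⟩ | ⟨h, e⟩
        · rw [e]; have : x < A - 3 := by
            by_contra hcon; exact hx ⟨by linarith, by linarith⟩
          nlinarith
        · exact absurd ⟨by linarith, by linarith⟩ hx
        · rw [e]; have : B + 3 < x := by
            by_contra hcon; exact hx ⟨by linarith, by linarith⟩
          nlinarith
      have := mul_le_mul_of_nonneg_left e4 (mul_nonneg (sq_nonneg (g x)) hq)
      nlinarith
  have hL2 : L ^ 2 ≤ 9 * m ^ 2 := by nlinarith
  have hm2 : 100 ≤ m ^ 2 := by nlinarith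
  have hJ2 : (L + 6) * (L + 3) ≤ 11.88 * m ^ 2 := by nlinarith
  have hJ3 := mul_le_mul_of_nonneg_right hJ2 hE0
  have hJ4 := mul_le_mul_of_nonneg_right hL2 hE0
  have hJ5 := mul_le_mul_of_nonneg_right hm2 hE0
  constructor <;> linarith

lemma int_exp_half : ∫ x : ℝ, Real.exp (-x ^ 2 / 2) = Real.sqrt (2 * Real.pi) := by
  have h := integral_gaussian (1/2)
  rw [show Real.pi / (1/2) = 2 * Real.pi by ring] at h
  rw [← h]
  congr 1; funext x; congr 1; ring

lemma qq_integrable {A B : ℝ} (h : A ≤ B) : Integrable (qq A B) := by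
  have := qq_int h (u := fun _ => 1) (M := 1) continuous_const (fun x => by
    rw [abs_one]; nlinarith [sq_nonneg x])
  simpa using this

lemma int_qq {A B : ℝ} (h : A ≤ B) : ∫ x, qq A B x = (B - A) + Real.sqrt (2 * Real.pi) := by
  set F : ℝ → ℝ := fun x => Real.exp (-x ^ 2 / 2) with hF
  have hFi : Integrable F := by
    have := integrable_exp_neg_mul_sq (b := 1/2) (by norm_num)
    refine this.congr (Filter.Eventually.of_forall fun x => ?_)
    simp only [hF]; congr 1; ring
  have hi := qq_integrable h
  have s1 : ∫ x in Set.Iic A, qq A B x = ∫ x in Set.Iic 0, F x := by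
    rw [← integral_indicator measurableSet_Iic, ← integral_indicator measurableSet_Iic,
      ← integral_sub_right_eq_self ((Set.Iic 0).indicator F) A]
    congr 1; funext x
    by_cases hx : x ≤ A
    · rw [Set.indicator_of_mem (by exact hx), Set.indicator_of_mem (by simpa using hx)]
      unfold qq dl
      rw [max_eq_right (by linarith), max_eq_left (by linarith)]
      simp only [hF]; congr 1; ring
    · rw [Set.indicator_of_notMem (by exact hx), Set.indicator_of_notMem (by simpa using hx)]
  have s2 : ∫ x in Set.Ioi B, qq A B x = ∫ x in Set.Ioi 0, F x := by
    rw [← integral_indicator measurableSet_Ioi, ← integral_indicator measurableSet_Ioi,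
      ← integral_sub_right_eq_self ((Set.Ioi 0).indicator F) B]
    congr 1; funext x
    by_cases hx : B < x
    · rw [Set.indicator_of_mem (by exact hx), Set.indicator_of_mem (by simpa using hx)]
      unfold qq dl
      rw [max_eq_left (by linarith), max_eq_right (by linarith)]
      simp only [hF]; congr 1; ring
    · rw [Set.indicator_of_notMem (by exact hx), Set.indicator_of_notMem (by simpa using hx)]
  have s3 : ∫ x in Set.Ioc A B, qq A B x = B - A := by
    have : ∫ x in Set.Ioc A B, qq A B x = ∫ x in Set.Ioc A B, (1:ℝ) := by
      apply setIntegral_congr_fun measurableSet_Ioc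
      intro x hx
      simp only [qq, dl]
      rw [max_eq_right (by linarith [hx.2]), max_eq_right (by linarith [hx.1])]
      simp
    rw [this, setIntegral_const, smul_eq_mul, Measure.real, Real.volume_Ioc,
      ENNReal.toReal_ofReal (by linarith), mul_one]
  have s4 : (∫ x in Set.Iic 0, F x) + ∫ x in Set.Ioi 0, F x = Real.sqrt (2 * Real.pi) := by
    rw [← int_exp_half, ← integral_add_compl (measurableSet_Iic (a := (0:ℝ))) hFi, Set.compl_Iic]
  rw [← integral_add_compl (measurableSet_Iic (a := A)) hi, Set.compl_Iic,
    ← Set.Ioc_union_Ioi_eq_Ioi h, setIntegral_union (Set.Ioc_disjoint_Ioi le_rfl) measurableSet_Ioi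
      hi.integrableOn hi.integrableOn, s1, s2, s3]
  linarith

lemma int_dl_sq {A B : ℝ} (h : A ≤ B) : ∫ x, dl A B x ^ 2 * qq A B x ≤ ∫ x, qq A B x := by
  obtain ⟨hi, h0⟩ := ibp (A := A) (B := B) (c := A) le_rfl h (g := fun _ => 1) (g' := fun _ => 0)
    (fun x => hasDerivAt_const x 1) continuous_const (M := 1) (by simp) (by simp)
  have hdc := dl_cont A B
  have hY : Integrable (fun x => dl A B x ^ 2 * qq A B x) :=
    qq_int h (M := 2 * (1 + A ^ 2)) (by fun_prop) fun x => by
      rw [abs_of_nonneg (sq_nonneg _)]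
      have := dl_sq_le_sub le_rfl h x
      nlinarith [sq_nonneg (x + A), sq_nonneg (x * A), sq_nonneg x, sq_nonneg A]
  have h1 := qq_integrable h
  rw [← sub_nonneg, ← integral_sub h1 hY, ← h0]
  apply integral_mono hi (h1.sub hY)
  intro x
  have := dl_sq_le le_rfl h x
  have := mul_le_mul_of_nonneg_right this (qq_pos A B x).le
  simp only [Pi.sub_apply]
  linarith

lemma psi (h : ℝ) : (1 + h) ^ 2 * Real.log ((1 + h) ^ 2) - (1 + h) ^ 2 + 1
    ≤ h ^ 2 * (3 + Real.log (2 + 2 * h ^ 2)) := by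
  have hl : 0 ≤ Real.log (2 + 2 * h ^ 2) := Real.log_nonneg (by nlinarith [sq_nonneg h])
  by_cases h0 : 1 + h = 0
  · have : h = -1 := by linarith
    subst this
    norm_num at hl ⊢
    linarith
  have hp : 0 < (1 + h) ^ 2 := by positivity
  have hlog : Real.log ((1 + h) ^ 2) ≤ Real.log (2 + 2 * h ^ 2) :=
    Real.log_le_log hp (by nlinarith [sq_nonneg (1 - h)])
  rcases le_total (-(1/2)) h with hh | hh
  · have e1 : Real.log ((1 + h) ^ 2) ≤ 2 * h := by
      rw [Real.log_pow]
      have := Real.log_le_sub_one_of_pos (show 0 < 1 + h by linarith)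
      push_cast; linarith
    have e2 := mul_le_mul_of_nonneg_left e1 (show 0 ≤ 1 + 2 * h by linarith)
    have e3 := mul_le_mul_of_nonneg_left hlog (sq_nonneg h)
    nlinarith
  · have e1 : (1 + h) ^ 2 * Real.log ((1 + h) ^ 2) ≤ h ^ 2 * Real.log (2 + 2 * h ^ 2) := by
      calc _ ≤ (1 + h) ^ 2 * Real.log (2 + 2 * h ^ 2) := mul_le_mul_of_nonneg_left hlog hp.le
        _ ≤ _ := mul_le_mul_of_nonneg_right (by nlinarith) hl
    nlinarith

lemma psi_scaled {k : ℝ} (hk : k ≠ 0) (f : ℝ) :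
    f ^ 2 * Real.log (f ^ 2 / k ^ 2) - f ^ 2 + k ^ 2
    ≤ (f - k) ^ 2 * (3 + Real.log (2 + 2 * ((f - k) ^ 2 / k ^ 2))) := by
  have h := psi ((f - k) / k)
  have e : 1 + (f - k) / k = f / k := by field_simp; ring
  rw [e, div_pow, div_pow] at h
  have h2 := mul_le_mul_of_nonneg_left h (sq_nonneg k)
  have hk2 : k ^ 2 ≠ 0 := by positivity
  calc _ = k ^ 2 * (f ^ 2 / k ^ 2 * Real.log (f ^ 2 / k ^ 2) - f ^ 2 / k ^ 2 + 1) := by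
        field_simp
    _ ≤ _ := h2
    _ = _ := by field_simp

lemma ent_core {p f W : ℝ → ℝ} {k T : ℝ} (hpc : Continuous p) (hp : ∀ x, 0 ≤ p x) (hpi : Integrable p)
    (hp1 : ∫ x, p x = 1) (hf : Continuous f) (hfs : HasCompactSupport f)
    (hW0 : ∀ x, 0 ≤ W x) (hWi : Integrable (fun x => W x * p x))
    (hgi : Integrable (fun x => (f x - k) ^ 2 * p x))
    (hgW : Integrable (fun x => (f x - k) ^ 2 * W x * p x)) (hT : 0 < T)
    (hW : ∀ x, 2 + 2 * ((f x - k) ^ 2 / T) ≤ Real.exp (W x)) (hM : 0 < ∫ x, f x ^ 2 * p x) :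
    ∫ x, f x ^ 2 * Real.log (f x ^ 2 / ∫ y, f y ^ 2 * p y) * p x ≤
      T * (1 + 2 * ∫ x, W x * p x) + 2 * (∫ x, (f x - k) ^ 2 * W x * p x)
        + 3 * ∫ x, (f x - k) ^ 2 * p x := by
  have iL : ∀ t : ℝ, 0 < t → Integrable (fun x => f x ^ 2 * Real.log (f x ^ 2 / t) * p x) := by
    intro t ht
    apply Continuous.integrable_of_hasCompactSupport
    · have e : (fun x => f x ^ 2 * Real.log (f x ^ 2 / t) * p x) =
          fun x => t * ((f x ^ 2 / t) * Real.log (f x ^ 2 / t)) * p x := by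
        funext x; field_simp
      rw [e]
      have : Continuous fun x => (f x ^ 2 / t) * Real.log (f x ^ 2 / t) :=
        Real.continuous_mul_log.comp (by fun_prop : Continuous fun x => f x ^ 2 / t)
      fun_prop
    · have e : (fun x => f x ^ 2 * Real.log (f x ^ 2 / t) * p x) =
          f * fun x => (f x * Real.log (f x ^ 2 / t) * p x) := by
        funext x; simp only [Pi.mul_apply]; ring
      rw [e]; exact hfs.mul_right
  have iF : Integrable (fun x => f x ^ 2 * p x) := by
    apply Continuous.integrable_of_hasCompactSupport (by fun_prop)
    have e : (fun x => f x ^ 2 * p x) = f * fun x => f x * p x := by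
      funext x; simp only [Pi.mul_apply]; ring
    rw [e]; exact hfs.mul_right
  set M := ∫ x, f x ^ 2 * p x with hMdef
  have var : ∀ t : ℝ, 0 < t → ∫ x, f x ^ 2 * Real.log (f x ^ 2 / M) * p x ≤
      (∫ x, f x ^ 2 * Real.log (f x ^ 2 / t) * p x) - M + t := by
    intro t ht
    have e : (fun x => f x ^ 2 * Real.log (f x ^ 2 / M) * p x) =
        fun x => f x ^ 2 * Real.log (f x ^ 2 / t) * p x + Real.log (t / M) * (f x ^ 2 * p x) := by
      funext x
      by_cases h0 : f x = 0
      · simp [h0]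
      · have h1 : f x ^ 2 ≠ 0 := by positivity
        rw [Real.log_div h1 hM.ne', Real.log_div h1 ht.ne', Real.log_div ht.ne' hM.ne']; ring
    rw [e, integral_add (iL t ht) (iF.const_mul _), integral_const_mul, ← hMdef]
    have h2 := Real.log_le_sub_one_of_pos (div_pos ht hM)
    have h3 := mul_le_mul_of_nonneg_right h2 hM.le
    have h4 : (t / M - 1) * M = t - M := by field_simp
    linarith
  have hIg : 0 ≤ ∫ x, (f x - k) ^ 2 * p x := integral_nonneg fun x => mul_nonneg (sq_nonneg _) (hp x)
  have hIgW : 0 ≤ ∫ x, (f x - k) ^ 2 * W x * p x :=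
    integral_nonneg fun x => mul_nonneg (mul_nonneg (sq_nonneg _) (hW0 x)) (hp x)
  have hIW : 0 ≤ ∫ x, W x * p x := integral_nonneg fun x => mul_nonneg (hW0 x) (hp x)
  rcases le_or_gt (k ^ 2) T with hk | hk
  · have h1 := var T hT
    have h2 : ∫ x, f x ^ 2 * Real.log (f x ^ 2 / T) * p x ≤
        2 * T * (∫ x, W x * p x) + 2 * (∫ x, (f x - k) ^ 2 * W x * p x) := by
      rw [← integral_const_mul, ← integral_const_mul, ← integral_add (hWi.const_mul _) (hgW.const_mul _)]
      apply integral_mono (iL T hT) ((hWi.const_mul _).add (hgW.const_mul _))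
      intro x
      simp only [Pi.add_apply]
      have hb : f x ^ 2 ≤ 2 * T + 2 * (f x - k) ^ 2 := by nlinarith [sq_nonneg (f x - 2 * k)]
      have hl : f x ^ 2 * Real.log (f x ^ 2 / T) ≤ f x ^ 2 * W x := by
        by_cases h0 : f x = 0
        · simp [h0]
        · apply mul_le_mul_of_nonneg_left _ (sq_nonneg _)
          rw [Real.log_le_iff_le_exp (by positivity)]
          refine le_trans ?_ (hW x)
          rw [div_le_iff₀ hT]
          have : (2 + 2 * ((f x - k) ^ 2 / T)) * T = 2 * T + 2 * (f x - k) ^ 2 := by field_simp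
          linarith
      have h3 := mul_le_mul_of_nonneg_right hb (hW0 x)
      have h4 := mul_le_mul_of_nonneg_right (hl.trans h3) (hp x)
      linarith
    linarith
  · have hk0 : k ≠ 0 := by rintro rfl; norm_num at hk; linarith
    have hk2 : 0 < k ^ 2 := by positivity
    have h1 := var (k ^ 2) hk2
    have h2 : (∫ x, f x ^ 2 * Real.log (f x ^ 2 / k ^ 2) * p x) - M + k ^ 2 ≤
        3 * (∫ x, (f x - k) ^ 2 * p x) + ∫ x, (f x - k) ^ 2 * W x * p x := by
      have e : k ^ 2 = ∫ x, k ^ 2 * p x := by rw [integral_const_mul, hp1, mul_one]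
      have i1 : Integrable (fun x => f x ^ 2 * Real.log (f x ^ 2 / k ^ 2) * p x - f x ^ 2 * p x) :=
        (iL _ hk2).sub iF
      calc _ = (∫ x, f x ^ 2 * Real.log (f x ^ 2 / k ^ 2) * p x) - M + ∫ x, k ^ 2 * p x := by rw [← e]
        _ = ∫ x, (f x ^ 2 * Real.log (f x ^ 2 / k ^ 2) * p x - f x ^ 2 * p x + k ^ 2 * p x) := by
          rw [integral_add i1 (hpi.const_mul _), integral_sub (iL _ hk2) iF]
        _ ≤ ∫ x, (3 * ((f x - k) ^ 2 * p x) + (f x - k) ^ 2 * W x * p x) := by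
          apply integral_mono (i1.add (hpi.const_mul _)) ((hgi.const_mul _).add hgW)
          intro x
          simp only [Pi.add_apply]
          have h5 := psi_scaled hk0 (f x)
          have h6 : Real.log (2 + 2 * ((f x - k) ^ 2 / k ^ 2)) ≤ W x := by
            rw [Real.log_le_iff_le_exp (by positivity)]
            refine le_trans ?_ (hW x)
            gcongr
          have h7 := mul_le_mul_of_nonneg_left h6 (sq_nonneg (f x - k))
          have h8 : f x ^ 2 * Real.log (f x ^ 2 / k ^ 2) - f x ^ 2 + k ^ 2 ≤
            3 * (f x - k) ^ 2 + (f x - k) ^ 2 * W x := by linarith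
          have := mul_le_mul_of_nonneg_right h8 (hp x)
          linarith
        _ = _ := by rw [integral_add (hgi.const_mul _) hgW, integral_const_mul]
    have : 0 ≤ T * (1 + 2 * ∫ x, W x * p x) := by positivity
    linarith

lemma pi_eq {m a : ℝ} (hm : 10 ≤ m) (x : ℝ) :
    piDensA m a x = (1 - Real.exp (-(a ^ 2 * m ^ 2) / 2)) / Real.sqrt (2 * Real.pi) * qq m m x
      + Real.exp (-(a ^ 2 * m ^ 2) / 2) / (3 * m + Real.sqrt (2 * Real.pi)) * qq (-m) (2 * m) x := by
  have e1 : dl m m x ^ 2 = (x - m) ^ 2 := by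
    rcases dl_cases (le_refl m) x with ⟨h, e⟩ | ⟨h, h', e⟩ | ⟨h, e⟩ <;> rw [e]
    have : x = m := le_antisymm h' h
    rw [this]; ring
  unfold piDensA gaussAt smUnif qq
  rw [infDist_sq (by linarith), e1]
  ring

set_option maxHeartbeats 2000000 in
lemma core (m s w1 w2 : ℝ) (hm : 10 ≤ m) (hs : 0.69 ≤ s) (hw1 : 0 ≤ w1)
    (hw2 : w2 = Real.exp (-s) / (3 * m + Real.sqrt (2 * Real.pi)))
    (hsum : w1 * Real.sqrt (2 * Real.pi) + w2 * (3 * m + Real.sqrt (2 * Real.pi)) = 1)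
    {p : ℝ → ℝ} (hpe : ∀ x, p x = w1 * qq m m x + w2 * qq (-m) (2 * m) x)
    {f : ℝ → ℝ} (hf : ContDiff ℝ (⊤ : ℕ∞) f) (hfs : HasCompactSupport f) :
    ∫ x, f x ^ 2 * Real.log (f x ^ 2 / ∫ y, f y ^ 2 * p y) * p x ≤
      3240 * s * m ^ 2 * ∫ x, (deriv f x) ^ 2 * p x := by
  have hA : -m ≤ m := by linarith
  have hB : m ≤ 2 * m := by linarith
  have hAB : -m ≤ 2 * m := by linarith
  set Z := 3 * m + Real.sqrt (2 * Real.pi) with hZ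
  have hsq0 : 0 < Real.sqrt (2 * Real.pi) := by positivity
  have hsq3 : Real.sqrt (2 * Real.pi) ≤ 3 := by
    rw [Real.sqrt_le_iff]; constructor
    · norm_num
    · linarith [Real.pi_lt_d2]
  have hZ0 : 0 < Z := by linarith
  have hw20 : 0 < w2 := by rw [hw2]; positivity
  have hq1 := qq_cont m m
  have hq2 := qq_cont (-m) (2 * m)
  have hd := dl_cont (-m) (2 * m)
  have hpfun : p = fun x => w1 * qq m m x + w2 * qq (-m) (2 * m) x := funext hpe
  have hpc : Continuous p := by rw [hpfun]; fun_prop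
  have hp0 : ∀ x, 0 < p x := fun x => by
    rw [hpe]
    have := qq_pos m m x
    have := qq_pos (-m) (2 * m) x
    positivity
  -- integration against p
  have lin : ∀ (u : ℝ → ℝ) (M : ℝ), Continuous u → (∀ x, |u x| ≤ M * (1 + x ^ 2)) →
      Integrable (fun x => u x * p x) ∧ Integrable (fun x => u x * qq m m x) ∧
      Integrable (fun x => u x * qq (-m) (2 * m) x) ∧
      ∫ x, u x * p x = w1 * (∫ x, u x * qq m m x) + w2 * ∫ x, u x * qq (-m) (2 * m) x := by
    intro u M hu hb
    have i1 := qq_int (le_refl m) hu hb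
    have i2 := qq_int hAB hu hb
    have e : (fun x => u x * p x) = fun x => w1 * (u x * qq m m x) + w2 * (u x * qq (-m) (2 * m) x) := by
      funext x; rw [hpe]; ring
    rw [e, integral_add (i1.const_mul _) (i2.const_mul _), integral_const_mul, integral_const_mul]
    exact ⟨(i1.const_mul _).add (i2.const_mul _), i1, i2, rfl⟩
  have one_le : ∀ x : ℝ, 1 ≤ 1 + x ^ 2 := fun x => by nlinarith [sq_nonneg x]
  have hone := lin (fun _ => 1) 1 continuous_const (fun x => by rw [abs_one, one_mul]; exact one_le x)
  simp only [one_mul] at hone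
  obtain ⟨hpi, -, -, hp1⟩ := hone
  rw [int_qq le_rfl, int_qq hAB] at hp1
  have hp1 : ∫ x, p x = 1 := by
    rw [hp1, ← hsum, hZ]; ring
  -- second moment of the distance
  have hdb : ∀ x, dl (-m) (2 * m) x ^ 2 ≤ 2 * (1 + m ^ 2) * (1 + x ^ 2) := fun x => by
    have := dl_sq_le_sub hA hB x
    nlinarith [sq_nonneg (x + m), sq_nonneg (x * m), sq_nonneg x, sq_nonneg m]
  have hdlm : ∀ x, dl (-m) (2 * m) x ^ 2 ≤ dl m m x ^ 2 := fun x => by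
    refine (dl_sq_le_sub hA hB x).trans ?_
    rcases dl_cases (le_refl m) x with ⟨h, e⟩ | ⟨h, h', e⟩ | ⟨h, e⟩ <;> rw [e]
    rw [le_antisymm h' h]; simp
  have hdlmc := dl_cont m m
  obtain ⟨id1, id2, id3, id4⟩ := lin (fun x => dl (-m) (2 * m) x ^ 2) (2 * (1 + m ^ 2)) (by fun_prop)
    (fun x => by rw [abs_of_nonneg (sq_nonneg _)]; exact hdb x)
  have hdp : ∫ x, dl (-m) (2 * m) x ^ 2 * p x ≤ 1 := by
    have a1 := int_dl_sq hAB
    have a2 : ∫ x, dl (-m) (2 * m) x ^ 2 * qq m m x ≤ ∫ x, qq m m x := by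
      refine le_trans ?_ (int_dl_sq (le_refl m))
      apply integral_mono id2
      · refine qq_int (M := 2 * (1 + m ^ 2)) le_rfl (by fun_prop) fun x => ?_
        rw [abs_of_nonneg (sq_nonneg _)]
        have := dl_sq_le_sub (le_refl m) (le_refl m) x
        nlinarith [sq_nonneg (x + m), sq_nonneg (x * m), sq_nonneg x, sq_nonneg m]
      · intro x
        exact mul_le_mul_of_nonneg_right (hdlm x) (qq_pos _ _ _).le
    rw [int_qq le_rfl] at a2
    rw [int_qq hAB] at a1
    rw [id4, ← hsum]
    have b1 := mul_le_mul_of_nonneg_left a1 hw20.le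
    have b2 := mul_le_mul_of_nonneg_left a2 hw1
    rw [hZ]
    linarith
  -- the function g
  set k := f m with hk
  have hfc : Continuous f := hf.continuous
  have hdf : ∀ x, HasDerivAt f (deriv f x) x := fun x =>
    ((hf.differentiable (by simp)) x).hasDerivAt
  have hdc : Continuous (deriv f) := hf.continuous_deriv (by simp)
  have hg : ∀ x, HasDerivAt (fun x => f x - k) (deriv f x) x := fun x => (hdf x).sub_const k
  obtain ⟨M1, hM1⟩ := hfs.exists_bound_of_continuous hfc
  obtain ⟨M2, hM2⟩ := hfs.deriv.exists_bound_of_continuous hdc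
  set M := 2 * M1 + M2 with hMd
  have hM10 : 0 ≤ M1 := (norm_nonneg _).trans (hM1 0)
  have hM20 : 0 ≤ M2 := (norm_nonneg _).trans (hM2 0)
  have hMg : ∀ x, |f x - k| ≤ M := fun x => by
    have := abs_sub (f x) k
    have := hM1 x
    have := hM1 m
    rw [Real.norm_eq_abs] at *
    linarith
  have hMg' : ∀ x, |deriv f x| ≤ M := fun x => by
    have := hM2 x
    rw [Real.norm_eq_abs] at this
    linarith
  have hsq : ∀ x, (f x - k) ^ 2 ≤ M ^ 2 := fun x => by
    rw [← sq_abs]; exact pow_le_pow_left₀ (abs_nonneg _) (hMg x) 2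
  have hsq' : ∀ x, (deriv f x) ^ 2 ≤ M ^ 2 := fun x => by
    rw [← sq_abs]; exact pow_le_pow_left₀ (abs_nonneg _) (hMg' x) 2
  obtain ⟨iE, iE1, iE2, eE⟩ := lin (fun x => (deriv f x) ^ 2) (M ^ 2) (by fun_prop) (fun x => by
    rw [abs_of_nonneg (sq_nonneg _)]
    nlinarith [hsq' x, sq_nonneg x, mul_nonneg (sq_nonneg M) (sq_nonneg x)])
  obtain ⟨iI, iI1, iI2, eI⟩ := lin (fun x => (f x - k) ^ 2) (M ^ 2) (by fun_prop) (fun x => by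
    rw [abs_of_nonneg (sq_nonneg _)]
    nlinarith [hsq x, sq_nonneg x, mul_nonneg (sq_nonneg M) (sq_nonneg x)])
  obtain ⟨iY, iY1, iY2, eY⟩ := lin (fun x => (f x - k) ^ 2 * dl (-m) (2 * m) x ^ 2)
    (M ^ 2 * (2 * (1 + m ^ 2))) (by fun_prop) (fun x => by
      rw [abs_of_nonneg (by positivity), mul_assoc]
      exact mul_le_mul (hsq x) (hdb x) (sq_nonneg _) (sq_nonneg _))
  obtain ⟨hI1, hY1⟩ := hardy (le_refl m) (le_refl m) (by linarith) hm hg hdc hMg hMg' (by simp [hk])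
  obtain ⟨hI2, hY2⟩ := hardy hA hB (by linarith) hm hg hdc hMg hMg' (by simp [hk])
  have pw := ptwise hA hB hg hdc iE2 (by simp [hk])
  have hY1' : ∫ x, ((f x - k) ^ 2 * dl (-m) (2 * m) x ^ 2) * qq m m x ≤
      119 * m ^ 2 * ∫ x, (deriv f x) ^ 2 * qq m m x := by
    refine le_trans ?_ hY1
    apply integral_mono iY1
    · refine qq_int (M := M ^ 2 * (2 * (1 + m ^ 2))) le_rfl (by fun_prop) fun x => ?_
      rw [abs_of_nonneg (by positivity), mul_assoc]
      refine mul_le_mul (hsq x) ?_ (sq_nonneg _) (sq_nonneg _)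
      have := dl_sq_le_sub (le_refl m) (le_refl m) x
      nlinarith [sq_nonneg (x + m), sq_nonneg (x * m), sq_nonneg x, sq_nonneg m]
    · intro x
      exact mul_le_mul_of_nonneg_right (mul_le_mul_of_nonneg_left (hdlm x) (sq_nonneg _))
        (qq_pos _ _ _).le
  have hE10 : 0 ≤ ∫ x, (deriv f x) ^ 2 * qq m m x :=
    integral_nonneg fun x => mul_nonneg (sq_nonneg _) (qq_pos _ _ _).le
  set E := ∫ x, (deriv f x) ^ 2 * p x with hE
  set E2 := ∫ x, (deriv f x) ^ 2 * qq (-m) (2 * m) x with hE2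
  have hI : ∫ x, (f x - k) ^ 2 * p x ≤ 26 * m ^ 2 * E := by
    rw [eI, eE]
    have b1 := mul_le_mul_of_nonneg_left hI1 hw1
    have b2 := mul_le_mul_of_nonneg_left hI2 hw20.le
    linarith
  have hY : ∫ x, ((f x - k) ^ 2 * dl (-m) (2 * m) x ^ 2) * p x ≤ 119 * m ^ 2 * E := by
    rw [eY, eE]
    have b1 := mul_le_mul_of_nonneg_left hY1' hw1
    have b2 := mul_le_mul_of_nonneg_left hY2 hw20.le
    linarith
  have hE20 : E2 ≤ Z * Real.exp s * E := by
    have b1 : w2 * E2 ≤ E := by rw [eE]; nlinarith [mul_nonneg hw1 hE10]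
    have b2 := mul_le_mul_of_nonneg_left b1 (show 0 ≤ Z * Real.exp s by positivity)
    have b3 : Z * Real.exp s * (w2 * E2) = E2 := by
      rw [hw2, Real.exp_neg]; field_simp
    linarith
  have hE0 : 0 ≤ E := integral_nonneg fun x => mul_nonneg (sq_nonneg _) (hp0 x).le
  have hE2n : 0 ≤ E2 := integral_nonneg fun x => mul_nonneg (sq_nonneg _) (qq_pos _ _ _).le
  -- trivial case
  by_cases hf0 : ∀ x, f x = 0
  · have : ∀ x, f x ^ 2 * Real.log (f x ^ 2 / ∫ y, f y ^ 2 * p y) * p x = 0 := fun x => by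
      rw [hf0 x]; ring
    simp only [this, integral_zero]
    have : 0 ≤ s := by linarith
    positivity
  push Not at hf0
  obtain ⟨x0, hx0⟩ := hf0
  have hEpos : 0 < E := by
    rcases hE0.eq_or_lt with h | h
    · exfalso
      have hz : E2 = 0 := le_antisymm (by rw [← h] at hE20; simpa using hE20) hE2n
      have hconst : ∀ x, f x = k := fun x => by
        have := pw x
        rw [hz, mul_zero] at this
        have h3 : (f x - k) ^ 2 ≤ 0 := by
          by_contra hcon
          push Not at hcon
          have := mul_pos hcon (qq_pos (-m) (2 * m) x)
          linarith
        have : f x - k = 0 := by nlinarith [sq_nonneg (f x - k)]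
        linarith
      have hk0 : k ≠ 0 := by rw [← hconst x0]; exact hx0
      have : f = fun _ => k := funext hconst
      rw [this] at hfs
      have h4 := hfs.isCompact
      have h5 : tsupport (fun _ : ℝ => k) = Set.univ := by
        rw [tsupport, Function.support_const hk0, closure_univ]
      rw [h5] at h4
      exact noncompact_univ ℝ h4
    · exact h
  have hMpos : 0 < ∫ x, f x ^ 2 * p x := by
    apply Continuous.integral_pos_of_hasCompactSupport_nonneg_nonzero (x := x0)
    · fun_prop
    · have e : (fun x => f x ^ 2 * p x) = f * fun x => f x * p x := by
        funext x; simp only [Pi.mul_apply]; ring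
      rw [e]; exact hfs.mul_right
    · intro x; exact mul_nonneg (sq_nonneg _) (hp0 x).le
    · exact mul_ne_zero (pow_ne_zero 2 hx0) (hp0 x0).ne'
  have hm2 : 0 < m ^ 2 := by positivity
  set W : ℝ → ℝ := fun x => s + 3 + dl (-m) (2 * m) x ^ 2 with hWdef
  have eW : (fun x => W x * p x) = fun x => (s + 3) * p x + dl (-m) (2 * m) x ^ 2 * p x := by
    funext x; simp only [hWdef]; ring
  have iW : Integrable (fun x => W x * p x) := by
    rw [eW]; exact (hpi.const_mul _).add id1
  have vW : ∫ x, W x * p x ≤ s + 4 := by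
    rw [eW, integral_add (hpi.const_mul _) id1, integral_const_mul, hp1]; linarith
  have egW : (fun x => (f x - k) ^ 2 * W x * p x) = fun x => (s + 3) * ((f x - k) ^ 2 * p x)
      + ((f x - k) ^ 2 * dl (-m) (2 * m) x ^ 2) * p x := by
    funext x; simp only [hWdef]; ring
  have igW : Integrable (fun x => (f x - k) ^ 2 * W x * p x) := by
    rw [egW]; exact (iI.const_mul _).add iY
  have vgW : ∫ x, (f x - k) ^ 2 * W x * p x ≤ (s + 3) * (26 * m ^ 2 * E) + 119 * m ^ 2 * E := by
    rw [egW, integral_add (iI.const_mul _) iY, integral_const_mul]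
    have := mul_le_mul_of_nonneg_left hI (show 0 ≤ s + 3 by linarith)
    linarith
  have hWexp : ∀ x, 2 + 2 * ((f x - k) ^ 2 / (m ^ 2 * E)) ≤ Real.exp (W x) := by
    intro x
    set δ := dl (-m) (2 * m) x with hδ
    have c1 : (f x - k) ^ 2 ≤ |x - m| * E2 * Real.exp (δ ^ 2 / 2) := by
      have h3 := mul_le_mul_of_nonneg_right (pw x) (Real.exp_pos (δ ^ 2 / 2)).le
      have h4 : qq (-m) (2 * m) x * Real.exp (δ ^ 2 / 2) = 1 := by
        unfold qq; rw [← hδ, ← Real.exp_add]; ring_nf; exact Real.exp_zero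
      rwa [mul_assoc ((f x - k) ^ 2), h4, mul_one] at h3
    have c2 : |x - m| ≤ 2 * m + |δ| := by
      rcases dl_cases hAB x with ⟨h, e⟩ | ⟨h, h', e⟩ | ⟨h, e⟩ <;> rw [hδ, e]
      · rw [abs_of_nonpos (by linarith), abs_of_nonpos (by linarith)]; linarith
      · rw [abs_zero, abs_le]; constructor <;> linarith
      · rw [abs_of_nonneg (by linarith), abs_of_nonneg (by linarith)]; linarith
    have c3 : (f x - k) ^ 2 ≤ (2 * m + |δ|) * (Z * Real.exp s * E) * Real.exp (δ ^ 2 / 2) := by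
      refine c1.trans ?_
      gcongr
    have c4 : (2 * m + |δ|) * Z ≤ m ^ 2 * (6.6 + 0.33 * |δ|) := by
      have : Z ≤ 3.3 * m := by rw [hZ]; linarith
      have d0 := abs_nonneg δ
      calc (2 * m + |δ|) * Z ≤ (2 * m + |δ|) * (3.3 * m) := by gcongr
        _ ≤ _ := by nlinarith [mul_nonneg d0 (show 0 ≤ m * (m - 10) by nlinarith)]
    have c5 : (f x - k) ^ 2 / (m ^ 2 * E) ≤ (6.6 + 0.33 * |δ|) * (Real.exp s * Real.exp (δ ^ 2 / 2)) := by
      rw [div_le_iff₀ (by positivity)]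
      have := mul_le_mul_of_nonneg_right c4 (show 0 ≤ E * (Real.exp s * Real.exp (δ ^ 2 / 2)) by positivity)
      linarith
    have c6 : 1 ≤ Real.exp s * Real.exp (δ ^ 2 / 2) := by
      rw [← Real.exp_add]; exact Real.one_le_exp (by nlinarith [sq_nonneg δ])
    have c7 : 15.2 + 0.66 * |δ| ≤ 20 * Real.exp (δ ^ 2 / 2) := by
      have := Real.add_one_le_exp (δ ^ 2 / 2)
      rw [← sq_abs δ] at this ⊢
      nlinarith [sq_nonneg (|δ| - 1)]
    have c8 : (20:ℝ) ≤ Real.exp 3 := by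
      have h1 := Real.exp_one_gt_d9
      have : Real.exp 3 = Real.exp 1 ^ 3 := by rw [← Real.exp_nat_mul]; norm_num
      rw [this]
      calc (20:ℝ) ≤ 2.7182818283 ^ 3 := by norm_num
        _ ≤ _ := by gcongr
    have c9 : Real.exp (W x) = Real.exp 3 * Real.exp (δ ^ 2 / 2) * (Real.exp s * Real.exp (δ ^ 2 / 2)) := by
      simp only [hWdef]; rw [← Real.exp_add, ← Real.exp_add, ← Real.exp_add]; congr 1; ring
    rw [c9]
    calc _ ≤ (15.2 + 0.66 * |δ|) * (Real.exp s * Real.exp (δ ^ 2 / 2)) := by linarith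
      _ ≤ (Real.exp 3 * Real.exp (δ ^ 2 / 2)) * (Real.exp s * Real.exp (δ ^ 2 / 2)) := by
        apply mul_le_mul_of_nonneg_right _ (by positivity)
        refine c7.trans ?_
        gcongr
  have fin := ent_core (k := k) (T := m ^ 2 * E) hpc (fun x => (hp0 x).le) hpi hp1 hfc hfs
    (fun x => by simp only [hWdef]; nlinarith [sq_nonneg (dl (-m) (2 * m) x)]) iW iI igW (by positivity) hWexp hMpos
  refine fin.trans ?_
  have hT : 0 < m ^ 2 * E := by positivity
  have t1 := mul_le_mul_of_nonneg_left vW hT.le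
  have t2 := mul_le_mul_of_nonneg_right hs hT.le
  linarith

/-- For m ≥ 10 and a ∈ (√(2 log 2)/m, 1], the target
π = (1−e^{−a²m²/2})N(m,1) + e^{−a²m²/2}u_m satisfies a log-Sobolev inequality with
constant 81a²m⁵/(1 − 2e^{−a²m²/2}). -/
theorem general_unimodal_target_log_sobolev
    (m a : ℝ) (hm : 10 ≤ m)
    (ha : a ∈ Set.Ioc (Real.sqrt (2 * Real.log 2) / m) 1) :
    ∀ f : ℝ → ℝ, ContDiff ℝ (⊤ : ℕ∞) f → HasCompactSupport f →
      (∫ x, (f x) ^ 2 * Real.log ((f x) ^ 2 / ∫ y, (f y) ^ 2 * piDensA m a y)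
          * piDensA m a x)
        ≤ 2 * (81 * a ^ 2 * m ^ 5 / (1 - 2 * Real.exp (-(a ^ 2 * m ^ 2) / 2)))
            * ∫ x, (deriv f x) ^ 2 * piDensA m a x := by
  intro f hf hfs
  obtain ⟨ha1, ha2⟩ := ha
  have hm0 : 0 < m := by linarith
  have hl2 : 0.69 < Real.log 2 := by linarith [Real.log_two_gt_d9]
  have hs : Real.log 2 < a ^ 2 * m ^ 2 / 2 := by
    rw [div_lt_iff₀ hm0] at ha1
    have h1 : 2 * Real.log 2 < (a * m) ^ 2 := Real.lt_sq_of_sqrt_lt ha1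
    nlinarith
  have hε : Real.exp (-(a ^ 2 * m ^ 2) / 2) < 1 / 2 := by
    have : Real.exp (-(a ^ 2 * m ^ 2) / 2) < Real.exp (-Real.log 2) := Real.exp_lt_exp.2 (by linarith)
    rwa [Real.exp_neg, Real.exp_log (by norm_num), ← one_div] at this
  have hsq0 : 0 < Real.sqrt (2 * Real.pi) := by positivity
  have key := core m (a ^ 2 * m ^ 2 / 2)
    ((1 - Real.exp (-(a ^ 2 * m ^ 2) / 2)) / Real.sqrt (2 * Real.pi))
    (Real.exp (-(a ^ 2 * m ^ 2) / 2) / (3 * m + Real.sqrt (2 * Real.pi)))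
    hm (by linarith) (div_nonneg (by linarith) hsq0.le) (by rw [neg_div])
    (by field_simp; ring) (pi_eq (a := a) hm) hf hfs
  refine key.trans ?_
  apply mul_le_mul_of_nonneg_right
  · have hε0 := Real.exp_pos (-(a ^ 2 * m ^ 2) / 2)
    have hden : 0 < 1 - 2 * Real.exp (-(a ^ 2 * m ^ 2) / 2) := by linarith
    have h1 : 81 * a ^ 2 * m ^ 5 ≤ 81 * a ^ 2 * m ^ 5 / (1 - 2 * Real.exp (-(a ^ 2 * m ^ 2) / 2)) := by
      rw [le_div_iff₀ hden]
      have : 0 ≤ 81 * a ^ 2 * m ^ 5 := by positivity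
      nlinarith
    have h2 : 0 ≤ a ^ 2 * m ^ 4 * (m - 10) := mul_nonneg (by positivity) (by linarith)
    nlinarith
  · apply integral_nonneg
    intro x
    apply mul_nonneg (sq_nonneg _)
    rw [pi_eq hm]
    have := qq_pos m m x
    have := qq_pos (-m) (2 * m) x
    have : 0 ≤ 1 - Real.exp (-(a ^ 2 * m ^ 2) / 2) := by linarith
    positivity
end

section
/- Let m ≥ 4 and let u_m(x) = e^{−d(x,[−m,2m])²/2} / (3m + √(2π)) be the smoothed uniform density on [−m, 2m]. Then u_m satisfies a log-Sobolev inequality with constant 16 m²: for every smooth compactly supported f : ℝ → ℝ, ∫ f² log( f² / ∫ f² u_m dx ) u_m dx ≤ 2 · 16 m² · ∫ (f′)² u_m dx. -/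
open MeasureTheory Real

lemma lsi_transport (w F : ℝ → ℝ) (hw : Continuous w) (hpos : ∀ x, 0 < w x) (hF : Continuous F)
    (hF0 : ∀ x, 0 ≤ F x) (a b : ℝ) (hab : a < b)
    (heq : ∫ x in a..b, F x * w x = ∫ x in a..b, w x) :
    ∃ T : ℝ → ℝ, T a = a ∧ T b = b ∧ (∀ x ∈ Set.Icc a b, HasDerivAt T (F x * w x / w (T x)) x) := by
  set v : ℝ → ℝ := fun x => w (max a (min b x)) with hv
  have hvc : Continuous v := by fun_prop
  have hvpos : ∀ x, 0 < v x := fun x => hpos _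
  have hvw : ∀ x ∈ Set.Icc a b, v x = w x := by
    intro x hx; simp [hv, hx.1, hx.2]
  obtain ⟨z, hz, hzmin⟩ := (isCompact_Icc (a := a) (b := b)).exists_isMinOn ⟨a, by simp [hab.le]⟩ hw.continuousOn
  have hδ : ∀ x, w z ≤ v x := by
    intro x
    apply hzmin
    constructor
    · exact le_max_left _ _
    · exact max_le hab.le (min_le_left _ _)
  set δ := w z
  have hδ0 : 0 < δ := hpos z
  set G : ℝ → ℝ := fun y => ∫ x in a..y, v x with hG
  set H : ℝ → ℝ := fun y => ∫ x in a..y, F x * v x with hH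
  have hGd : ∀ y, HasDerivAt G (v y) y := fun y =>
    intervalIntegral.integral_hasDerivAt_right (hvc.intervalIntegrable _ _) hvc.stronglyMeasurable.stronglyMeasurableAtFilter hvc.continuousAt
  have hFv : Continuous fun x => F x * v x := by fun_prop
  have hHd : ∀ y, HasDerivAt H (F y * v y) y := fun y =>
    intervalIntegral.integral_hasDerivAt_right (hFv.intervalIntegrable _ _) hFv.stronglyMeasurable.stronglyMeasurableAtFilter hFv.continuousAt
  have hGm : StrictMono G := strictMono_of_hasDerivAt_pos hGd hvpos
  have hHm : Monotone H := monotone_of_hasDerivAt_nonneg hHd (fun x => mul_nonneg (hF0 x) (hvpos x).le)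
  have hGa : G a = 0 := by simp [hG]
  have hHa : H a = 0 := by simp [hH]
  have hGb : H b = G b := by
    have e1 : G b = ∫ x in a..b, w x := by
      apply intervalIntegral.integral_congr
      intro x hx; rw [Set.uIcc_of_le hab.le] at hx; exact hvw x hx
    have e2 : H b = ∫ x in a..b, F x * w x := by
      apply intervalIntegral.integral_congr
      intro x hx; rw [Set.uIcc_of_le hab.le] at hx; simp only [hvw x hx]
    rw [e1, e2, heq]
  have hGc : Continuous G := continuous_iff_continuousAt.2 fun y => (hGd y).continuousAt
  have hmon : Monotone fun y => G y - δ * y := by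
    apply monotone_of_hasDerivAt_nonneg (f' := fun y => v y - δ)
    · intro y
      exact ((hGd y).sub ((hasDerivAt_id y).const_mul δ)).congr_deriv (by simp)
    · intro y; simpa using hδ y
  have hsurj : Function.Surjective G := by
    apply hGc.surjective
    · have : Filter.Tendsto (fun y => δ * y + (G 0 - δ * 0)) Filter.atTop Filter.atTop :=
        Filter.tendsto_atTop_add_const_right _ _ (Filter.tendsto_id.const_mul_atTop hδ0)
      refine Filter.tendsto_atTop_mono' _ ?_ this
      filter_upwards [Filter.eventually_ge_atTop 0] with y hy
      have := hmon hy; simp only at this; linarith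
    · have : Filter.Tendsto (fun y => δ * y + (G 0 - δ * 0)) Filter.atBot Filter.atBot :=
        Filter.tendsto_atBot_add_const_right _ _ (Filter.tendsto_id.const_mul_atBot hδ0)
      refine Filter.tendsto_atBot_mono' _ ?_ this
      filter_upwards [Filter.eventually_le_atBot 0] with y hy
      have := hmon hy; simp only at this; linarith
  set S := (hGm.orderIsoOfSurjective G hsurj) with hS
  have hSG : ∀ y, S y = G y := fun y => rfl
  have hGS : ∀ y, G (S.symm y) = y := fun y => S.apply_symm_apply y
  have hSd : ∀ y, HasDerivAt S.symm (v (S.symm y))⁻¹ y := fun y =>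
    HasDerivAt.of_local_left_inverse S.symm.continuous.continuousAt (hGd _) (hvpos _).ne'
      (Filter.Eventually.of_forall hGS)
  have ha : S.symm (H a) = a := by rw [hHa, ← hGa]; exact S.symm_apply_apply a
  have hb : S.symm (H b) = b := by rw [hGb]; exact S.symm_apply_apply b
  refine ⟨fun x => S.symm (H x), ha, hb, ?_⟩
  intro x hx
  have hm : S.symm (H x) ∈ Set.Icc a b := by
    constructor
    · calc a = S.symm (H a) := ha.symm
        _ ≤ _ := S.symm.monotone (hHm hx.1)
    · calc _ ≤ S.symm (H b) := S.symm.monotone (hHm hx.2)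
        _ = b := hb
  have := (hSd (H x)).comp x (hHd x)
  rw [hvw _ hm, hvw _ hx] at this
  exact this.congr_deriv (by field_simp)

lemma lsi_strong (W W' f f' : ℝ → ℝ) (κ : ℝ) (hκ : 0 < κ) (hW : ∀ x, HasDerivAt W (W' x) x)
    (hW' : Continuous W') (hconv : ∀ x y, W x + W' x * (y - x) + κ / 2 * (y - x) ^ 2 ≤ W y)
    (hf : ∀ x, HasDerivAt f (f' x) x) (hf' : Continuous f') (a b : ℝ) (hab : a < b)
    (heq : ∫ x in a..b, f x ^ 2 * exp (-W x) = ∫ x in a..b, exp (-W x)) :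
    ∫ x in a..b, f x ^ 2 * log (f x ^ 2) * exp (-W x) ≤
      2 / κ * ∫ x in a..b, f' x ^ 2 * exp (-W x) := by
  have hfc : Continuous f := continuous_iff_continuousAt.2 fun y => (hf y).continuousAt
  have hWc : Continuous W := continuous_iff_continuousAt.2 fun y => (hW y).continuousAt
  obtain ⟨T, hTa, hTb, hT⟩ := lsi_transport (fun x => exp (-W x)) (fun x => f x ^ 2)
    (by fun_prop) (fun x => exp_pos _) (by fun_prop) (fun x => sq_nonneg _) a b hab heq
  have hTc : ContinuousOn T (Set.Icc a b) := fun x hx => (hT x hx).continuousAt.continuousWithinAt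
  set D : ℝ → ℝ := fun x => (2 * f x * f' x * (T x - x) +
    f x ^ 2 * (f x ^ 2 * exp (-W x) / exp (-W (T x)) - 1)) * exp (-W x)
      + f x ^ 2 * (T x - x) * (exp (-W x) * (- W' x)) with hD
  have hder : ∀ x ∈ Set.uIcc a b, HasDerivAt (fun x => f x ^ 2 * (T x - x) * exp (-W x)) (D x) x := by
    intro x hx
    rw [Set.uIcc_of_le hab.le] at hx
    have := ((((hf x).pow 2).mul ((hT x hx).sub (hasDerivAt_id x))).mul ((hW x).neg.exp))
    exact this.congr_deriv (by simp [hD])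
  have hDc : ContinuousOn D (Set.uIcc a b) := by
    rw [Set.uIcc_of_le hab.le]
    have : ContinuousOn (fun x => exp (-W (T x))) (Set.Icc a b) :=
      (by fun_prop : Continuous fun y => exp (-W y)).comp_continuousOn hTc
    have h2 : ContinuousOn (fun x => f x ^ 2 * exp (-W x) / exp (-W (T x))) (Set.Icc a b) :=
      ContinuousOn.div (by fun_prop) this (fun x _ => (exp_pos _).ne')
    simp only [hD]
    fun_prop
  have hint := intervalIntegral.integral_eq_sub_of_hasDerivAt hder hDc.intervalIntegrable
  simp only [hTa, hTb, sub_self, mul_zero, zero_mul] at hint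
  have hlog : Continuous fun x => f x ^ 2 * log (f x ^ 2) * exp (-W x) := by
    have : Continuous fun x => f x ^ 2 * log (f x ^ 2) := continuous_mul_log.comp (hfc.pow 2)
    fun_prop
  have hsum : ∫ x in a..b, (D x + 2 / κ * (f' x ^ 2 * exp (-W x))) =
      2 / κ * ∫ x in a..b, f' x ^ 2 * exp (-W x) := by
    rw [intervalIntegral.integral_add hDc.intervalIntegrable
      (Continuous.intervalIntegrable (by fun_prop) _ _), hint,
      intervalIntegral.integral_const_mul, zero_add]
  rw [← hsum]
  apply intervalIntegral.integral_mono_on hab.le (hlog.intervalIntegrable _ _)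
    (hDc.intervalIntegrable.add (Continuous.intervalIntegrable (by fun_prop) _ _))
  intro x hx
  have key : f x ^ 2 * log (f x ^ 2) ≤ 2 * f x * f' x * (T x - x) +
    f x ^ 2 * (f x ^ 2 * exp (-W x) / exp (-W (T x)) - 1) + f x ^ 2 * (T x - x) * (- W' x)
     + 2 / κ * f' x ^ 2 := by
    have h1 : 0 ≤ 2 / κ * f' x ^ 2 + 2 * f x * f' x * (T x - x) + κ / 2 * f x ^ 2 * (T x - x) ^ 2 := by
      have : 2 / κ * f' x ^ 2 + 2 * f x * f' x * (T x - x) + κ / 2 * f x ^ 2 * (T x - x) ^ 2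
        = 2 / κ * (f' x + κ / 2 * f x * (T x - x)) ^ 2 := by field_simp; ring
      rw [this]; positivity
    by_cases h0 : f x = 0
    · simp only [h0]; simp; positivity
    have hp : 0 < f x ^ 2 := by positivity
    have h2 : log (f x ^ 2) ≤ (f x ^ 2 * exp (-W x) / exp (-W (T x)) - 1) + W x - W (T x) := by
      have := Real.log_le_sub_one_of_pos (x := f x ^ 2 * exp (-W x) / exp (-W (T x))) (by positivity)
      rw [log_div (by positivity) (by positivity), log_mul (by positivity) (by positivity), log_exp, log_exp] at this
      linarith
    have h3 := hconv x (T x)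
    have h4 : log (f x ^ 2) ≤ (f x ^ 2 * exp (-W x) / exp (-W (T x)) - 1) - W' x * (T x - x) - κ / 2 * (T x - x) ^ 2 := by linarith
    have h5 := mul_le_mul_of_nonneg_left h4 hp.le
    nlinarith
  have := mul_le_mul_of_nonneg_right key (exp_pos (-W x)).le
  simp only [hD]
  refine this.trans (le_of_eq ?_)
  ring

lemma lsi_strong_scaled (W W' f f' : ℝ → ℝ) (κ : ℝ) (hκ : 0 < κ) (hW : ∀ x, HasDerivAt W (W' x) x)
    (hW' : Continuous W') (hconv : ∀ x y, W x + W' x * (y - x) + κ / 2 * (y - x) ^ 2 ≤ W y)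
    (hf : ∀ x, HasDerivAt f (f' x) x) (hf' : Continuous f') (a b : ℝ) (hab : a < b) (c : ℝ) (hc : 0 < c)
    (heq : ∫ x in a..b, f x ^ 2 * exp (-W x) = c * ∫ x in a..b, exp (-W x)) :
    ∫ x in a..b, f x ^ 2 * log (f x ^ 2 / c) * exp (-W x) ≤
      2 / κ * ∫ x in a..b, f' x ^ 2 * exp (-W x) := by
  have hs : (√c) ^ 2 = c := Real.sq_sqrt hc.le
  have := lsi_strong W W' (fun x => f x / √c) (fun x => f' x / √c) κ hκ hW hW' hconv
    (fun x => (hf x).div_const _) (by fun_prop) a b hab (by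
      simp only [div_pow, hs, div_mul_eq_mul_div]
      rw [intervalIntegral.integral_div, heq]; field_simp)
  simp only [div_pow, hs, div_mul_eq_mul_div] at this
  rw [intervalIntegral.integral_div, intervalIntegral.integral_div] at this
  field_simp at this ⊢
  exact this

/-- Holley-Stroock. -/
lemma lsi_hs (V W W' f f' : ℝ → ℝ) (κ α : ℝ) (hκ : 0 < κ) (hV : Continuous V)
    (hW : ∀ x, HasDerivAt W (W' x) x)
    (hW' : Continuous W') (hconv : ∀ x y, W x + W' x * (y - x) + κ / 2 * (y - x) ^ 2 ≤ W y)
    (h1 : ∀ x, V x ≤ W x) (h2 : ∀ x, W x ≤ V x + α)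
    (hf : ∀ x, HasDerivAt f (f' x) x) (hf' : Continuous f') (a b : ℝ) (hab : a < b) (c : ℝ) (hc : 0 < c)
    (heq : ∫ x in a..b, f x ^ 2 * exp (-V x) = c * ∫ x in a..b, exp (-V x)) :
    ∫ x in a..b, f x ^ 2 * log (f x ^ 2 / c) * exp (-V x) ≤
      exp α * (2 / κ) * ∫ x in a..b, f' x ^ 2 * exp (-V x) := by
  have hfc : Continuous f := continuous_iff_continuousAt.2 fun y => (hf y).continuousAt
  have hWc : Continuous W := continuous_iff_continuousAt.2 fun y => (hW y).continuousAt
  have hwv : ∀ x, exp (-W x) ≤ exp (-V x) := fun x => exp_le_exp.2 (by linarith [h1 x])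
  have hvw : ∀ x, exp (-V x) ≤ exp α * exp (-W x) := fun x => by
    rw [← exp_add]; exact exp_le_exp.2 (by linarith [h2 x])
  have ii : ∀ g : ℝ → ℝ, Continuous g → IntervalIntegrable g volume a b := fun g hg => hg.intervalIntegrable _ _
  have hlogc : Continuous fun x => f x ^ 2 * log (f x ^ 2) := continuous_mul_log.comp (hfc.pow 2)
  set A := ∫ x in a..b, f x ^ 2 * exp (-V x) with hA
  set B := ∫ x in a..b, exp (-V x) with hB
  set Aw := ∫ x in a..b, f x ^ 2 * exp (-W x) with hAw
  set Bw := ∫ x in a..b, exp (-W x) with hBw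
  have hBpos : 0 < B := intervalIntegral.intervalIntegral_pos_of_pos (ii _ (by fun_prop)) (fun x => exp_pos _) hab
  have hBwpos : 0 < Bw := intervalIntegral.intervalIntegral_pos_of_pos (ii _ (by fun_prop)) (fun x => exp_pos _) hab
  have hApos : 0 < A := by rw [heq]; positivity
  have hAle : A ≤ exp α * Aw := by
    rw [hA, hAw, ← intervalIntegral.integral_const_mul]
    apply intervalIntegral.integral_mono_on hab.le (ii _ (by fun_prop)) (ii _ (by fun_prop))
    intro x _
    have := mul_le_mul_of_nonneg_left (hvw x) (sq_nonneg (f x))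
    linarith
  have hAwpos : 0 < Aw := by
    by_contra h
    push Not at h
    nlinarith [exp_pos α]
  set d := Aw / Bw with hd
  have hdpos : 0 < d := by positivity
  have hAd : Aw = d * Bw := by rw [hd]; field_simp
  have lw := lsi_strong_scaled W W' f f' κ hκ hW hW' hconv hf hf' a b hab d hdpos hAd
  have hsplit : ∀ e : ℝ, 0 < e → ∀ x, f x ^ 2 * log (f x ^ 2 / e) = f x ^ 2 * log (f x ^ 2) - log e * f x ^ 2 := by
    intro e he x
    by_cases h0 : f x = 0
    · simp [h0]
    rw [log_div (by positivity) he.ne']; ring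
  set L := ∫ x in a..b, f x ^ 2 * log (f x ^ 2) * exp (-V x) with hL
  set Lw := ∫ x in a..b, f x ^ 2 * log (f x ^ 2) * exp (-W x) with hLw
  have eV : ∀ e : ℝ, 0 < e → ∫ x in a..b, f x ^ 2 * log (f x ^ 2 / e) * exp (-V x) = L - log e * A := by
    intro e he
    simp only [hsplit e he, sub_mul, mul_assoc (log e)]
    rw [intervalIntegral.integral_sub (ii _ (by fun_prop)) (ii _ (by fun_prop)), intervalIntegral.integral_const_mul]
  have eW : ∀ e : ℝ, 0 < e → ∫ x in a..b, f x ^ 2 * log (f x ^ 2 / e) * exp (-W x) = Lw - log e * Aw := by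
    intro e he
    simp only [hsplit e he, sub_mul, mul_assoc (log e)]
    rw [intervalIntegral.integral_sub (ii _ (by fun_prop)) (ii _ (by fun_prop)), intervalIntegral.integral_const_mul]
  rw [eW d hdpos] at lw
  rw [eV c hc]
  -- comparison
  have phi : ∀ x, 0 ≤ f x ^ 2 * log (f x ^ 2) - log d * f x ^ 2 - f x ^ 2 + d := by
    intro x
    by_cases h0 : f x = 0
    · simp [h0, hdpos.le]
    have hp : 0 < f x ^ 2 := by positivity
    have := Real.log_le_sub_one_of_pos (x := d / f x ^ 2) (by positivity)
    rw [log_div hdpos.ne' hp.ne'] at this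
    have h3 := mul_le_mul_of_nonneg_left this hp.le
    have h4 : f x ^ 2 * (d / f x ^ 2 - 1) = d - f x ^ 2 := by field_simp
    linarith
  have hcmp : L - log d * A - A + d * B ≤ exp α * (Lw - log d * Aw - Aw + d * Bw) := by
    have e1 : L - log d * A - A + d * B = ∫ x in a..b, (f x ^ 2 * log (f x ^ 2) * exp (-V x) - log d * (f x ^ 2 * exp (-V x)) - f x ^ 2 * exp (-V x) + d * exp (-V x)) := by
      rw [intervalIntegral.integral_add (ii _ (by fun_prop)) (ii _ (by fun_prop)), intervalIntegral.integral_sub (ii _ (by fun_prop)) (ii _ (by fun_prop)), intervalIntegral.integral_sub (ii _ (by fun_prop)) (ii _ (by fun_prop)), intervalIntegral.integral_const_mul, intervalIntegral.integral_const_mul]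
    have e2 : Lw - log d * Aw - Aw + d * Bw = ∫ x in a..b, (f x ^ 2 * log (f x ^ 2) * exp (-W x) - log d * (f x ^ 2 * exp (-W x)) - f x ^ 2 * exp (-W x) + d * exp (-W x)) := by
      rw [intervalIntegral.integral_add (ii _ (by fun_prop)) (ii _ (by fun_prop)), intervalIntegral.integral_sub (ii _ (by fun_prop)) (ii _ (by fun_prop)), intervalIntegral.integral_sub (ii _ (by fun_prop)) (ii _ (by fun_prop)), intervalIntegral.integral_const_mul, intervalIntegral.integral_const_mul]
    rw [e1, e2, ← intervalIntegral.integral_const_mul]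
    apply intervalIntegral.integral_mono_on hab.le (ii _ (by fun_prop)) (ii _ (by fun_prop))
    intro x _
    have := mul_le_mul_of_nonneg_left (hvw x) (phi x)
    linarith
  have hmin : L - log c * A ≤ L - log d * A - A + d * B := by
    have := Real.log_le_sub_one_of_pos (x := d / c) (by positivity)
    rw [log_div hdpos.ne' hc.ne'] at this
    have h3 := mul_le_mul_of_nonneg_left this hApos.le
    have h4 : A * (d / c - 1) = d * B - A := by rw [heq]; field_simp
    linarith
  have hfin : ∫ x in a..b, f' x ^ 2 * exp (-W x) ≤ ∫ x in a..b, f' x ^ 2 * exp (-V x) := by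
    apply intervalIntegral.integral_mono_on hab.le (ii _ (by fun_prop)) (ii _ (by fun_prop))
    intro x _
    exact mul_le_mul_of_nonneg_left (hwv x) (sq_nonneg _)
  calc L - log c * A ≤ exp α * (Lw - log d * Aw - Aw + d * Bw) := hmin.trans hcmp
    _ = exp α * (Lw - log d * Aw) := by rw [hAd]; ring
    _ ≤ exp α * (2 / κ * ∫ x in a..b, f' x ^ 2 * exp (-W x)) := by gcongr
    _ ≤ exp α * (2 / κ * ∫ x in a..b, f' x ^ 2 * exp (-V x)) := by gcongr
    _ = _ := by ring

lemma lsi_hasDerivAt_of_sq (g : ℝ → ℝ) (t d : ℝ) (h : ∀ y, |g y - g t - d * (y - t)| ≤ (y - t) ^ 2) :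
    HasDerivAt g d t := by
  rw [hasDerivAt_iff_isLittleO]
  have h1 : (fun y => g y - g t - (y - t) • d) =O[nhds t] fun y => ‖y - t‖ ^ 2 := by
    apply Asymptotics.IsBigO.of_bound 1
    filter_upwards with y
    have := h y
    simp only [smul_eq_mul, norm_eq_abs, abs_pow, sq_abs, one_mul, mul_comm (y - t) d]
    exact this
  refine h1.trans_isLittleO ?_
  exact Asymptotics.isLittleO_pow_sub_sub t (by norm_num)

lemma lsi_max_sq (t : ℝ) : HasDerivAt (fun y => max y 0 ^ 2) (2 * max t 0) t := by
  apply lsi_hasDerivAt_of_sq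
  intro y
  rw [abs_le]
  rcases le_total y 0 with h1 | h1 <;> rcases le_total t 0 with h2 | h2 <;>
    simp only [max_eq_left, max_eq_right, h1, h2] <;> constructor <;> nlinarith

lemma lsi_max_sq_conv (t y : ℝ) : max t 0 ^ 2 + 2 * max t 0 * (y - t) ≤ max y 0 ^ 2 := by
  rcases le_total y 0 with h1 | h1 <;> rcases le_total t 0 with h2 | h2 <;>
    simp only [max_eq_left, max_eq_right, h1, h2] <;> nlinarith [sq_nonneg (y - t)]

lemma lsi_infDist (m x : ℝ) (hm : 0 < m) : Metric.infDist x (Set.Icc (-m) (2 * m)) ^ 2 =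
    max (x - 2 * m) 0 ^ 2 + max (-m - x) 0 ^ 2 := by
  have hne : (Set.Icc (-m) (2 * m)).Nonempty := ⟨0, by constructor <;> linarith⟩
  by_cases h1 : x < -m
  · have : Metric.infDist x (Set.Icc (-m) (2 * m)) = -m - x := by
      apply le_antisymm
      · have := Metric.infDist_le_dist_of_mem (x := x) (s := Set.Icc (-m) (2 * m)) (y := -m) ⟨le_rfl, by linarith⟩
        rw [Real.dist_eq, abs_of_neg (by linarith)] at this; linarith
      · rw [Metric.le_infDist hne]
        intro y hy
        rw [Real.dist_eq, abs_of_neg (by linarith [hy.1])]; linarith [hy.1]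
    rw [this, max_eq_right (by linarith), max_eq_left (by linarith)]; ring
  by_cases h2 : 2 * m < x
  · have : Metric.infDist x (Set.Icc (-m) (2 * m)) = x - 2 * m := by
      apply le_antisymm
      · have := Metric.infDist_le_dist_of_mem (x := x) (s := Set.Icc (-m) (2 * m)) (y := 2 * m) ⟨by linarith, le_rfl⟩
        rw [Real.dist_eq, abs_of_pos (by linarith)] at this; linarith
      · rw [Metric.le_infDist hne]
        intro y hy
        rw [Real.dist_eq, abs_of_pos (by linarith [hy.2])]; linarith [hy.2]
    rw [this, max_eq_left (by linarith), max_eq_right (by linarith)]; ring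
  push Not at h1 h2
  rw [Metric.infDist_zero_of_mem (Set.mem_Icc.2 ⟨h1, h2⟩), max_eq_right (by linarith), max_eq_right (by linarith)]; ring

/-- potential -/
noncomputable def lsiV (m x : ℝ) : ℝ := (max (x - 2 * m) 0 ^ 2 + max (-m - x) 0 ^ 2) / 2

lemma lsiV_cont (m : ℝ) : Continuous (lsiV m) := by unfold lsiV; fun_prop

/-- tail integral -/
lemma lsi_tail (b : ℝ) : IntegrableOn (fun x => exp (-(x - b) ^ 2 / 2)) (Set.Ioi b) ∧
    ∫ x in Set.Ioi b, exp (-(x - b) ^ 2 / 2) = √(2 * π) / 2 := by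
  have e : (fun x : ℝ => exp (-(x - b) ^ 2 / 2)) = fun x => (fun y => exp (-(1 / 2) * y ^ 2)) (x - b) := by
    funext x; congr 1; ring
  have hi : Integrable fun y : ℝ => exp (-(1 / 2) * y ^ 2) := integrable_exp_neg_mul_sq (by norm_num)
  constructor
  · rw [e]; exact (hi.comp_sub_right b).integrableOn
  · have h1 := integral_gaussian_Ioi (1 / 2)
    have h2 := (measurePreserving_sub_right volume b).setIntegral_preimage_emb
      (MeasurableEquiv.subRight b).measurableEmbedding (fun y : ℝ => exp (-(1 / 2) * y ^ 2)) (Set.Ioi 0)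
    rw [h1] at h2
    have h3 : (fun x : ℝ => x - b) ⁻¹' Set.Ioi 0 = Set.Ioi b := by ext; simp
    rw [e, ← h3]
    refine h2.trans ?_
    congr 2; ring

lemma lsiV_integral (m : ℝ) (hm : 0 < m) : Integrable (fun x => exp (-lsiV m x)) ∧
    ∫ x, exp (-lsiV m x) = 3 * m + √(2 * π) := by
  obtain ⟨i1, e1⟩ := lsi_tail (2 * m)
  obtain ⟨i2, e2⟩ := lsi_tail m
  have j1 : IntegrableOn (fun x => exp (-lsiV m x)) (Set.Ioi (2 * m)) ∧ ∫ x in Set.Ioi (2 * m), exp (-lsiV m x) = √(2 * π) / 2 := by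
    have : Set.EqOn (fun x => exp (-(x - 2 * m) ^ 2 / 2)) (fun x => exp (-lsiV m x)) (Set.Ioi (2 * m)) := by
      intro x hx
      simp only [lsiV]
      have hx' : 2 * m < x := hx
      rw [max_eq_left (by linarith), max_eq_right (by linarith)]
      congr 1; ring
    exact ⟨i1.congr_fun this measurableSet_Ioi, by rw [← e1]; exact (setIntegral_congr_fun measurableSet_Ioi this).symm⟩
  have j2 : IntegrableOn (fun x => exp (-lsiV m x)) (Set.Iic (-m)) ∧ ∫ x in Set.Iic (-m), exp (-lsiV m x) = √(2 * π) / 2 := by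
    have : Set.EqOn (fun x => exp (-(-x - m) ^ 2 / 2)) (fun x => exp (-lsiV m x)) (Set.Iic (-m)) := by
      intro x hx
      simp only [lsiV]
      have hx' : x ≤ -m := hx
      rw [max_eq_right (by linarith), max_eq_left (by linarith)]
      congr 1; ring
    constructor
    · refine IntegrableOn.congr_fun ?_ this measurableSet_Iic
      exact (integrableOn_Iic_iff_integrableOn_Iio).2 (by simpa using i2.comp_neg)
    · rw [← e2, ← setIntegral_congr_fun measurableSet_Iic this]
      simpa using integral_comp_neg_Iic (-m) (fun x => exp (-(x - m) ^ 2 / 2))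
  have j3 : IntegrableOn (fun x => exp (-lsiV m x)) (Set.Ioc (-m) (2 * m)) ∧ ∫ x in Set.Ioc (-m) (2 * m), exp (-lsiV m x) = 3 * m := by
    have : Set.EqOn (fun x => 1) (fun x => exp (-lsiV m x)) (Set.Ioc (-m) (2 * m)) := by
      intro x hx
      simp only [lsiV]
      rw [max_eq_right (by linarith [hx.2]), max_eq_right (by linarith [hx.1])]
      simp
    constructor
    · exact IntegrableOn.congr_fun (by simp) this measurableSet_Ioc
    · rw [← setIntegral_congr_fun measurableSet_Ioc this]
      simp
      rw [max_eq_left] <;> linarith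
  have hle : -m ≤ 2 * m := by linarith
  have k1 : IntegrableOn (fun x => exp (-lsiV m x)) (Set.Ioi (-m)) := by
    rw [← Set.Ioc_union_Ioi_eq_Ioi hle]; exact j3.1.union j1.1
  have hI : Integrable (fun x => exp (-lsiV m x)) := by
    rw [← integrableOn_univ, ← Set.Iic_union_Ioi (a := -m)]; exact j2.1.union k1
  refine ⟨hI, ?_⟩
  rw [← intervalIntegral.integral_Iic_add_Ioi j2.1 k1, j2.2, ← Set.Ioc_union_Ioi_eq_Ioi hle,
    setIntegral_union (Set.Ioc_disjoint_Ioi le_rfl) measurableSet_Ioi j3.1 j1.1, j3.2, j1.2]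
  ring

/-- The strongly convex comparison potential. -/
noncomputable def lsiW (c r x : ℝ) : ℝ :=
  (1 / (1 + r ^ 2)) * (x - c) ^ 2 / 2
    + (r ^ 2 / (1 + r ^ 2)) * (max (x - c - (r + 1 / r)) 0 ^ 2 + max (-(x - c) - (r + 1 / r)) 0 ^ 2) / 2

noncomputable def lsiW' (c r x : ℝ) : ℝ :=
  (1 / (1 + r ^ 2)) * (x - c)
    + (r ^ 2 / (1 + r ^ 2)) * (max (x - c - (r + 1 / r)) 0 - max (-(x - c) - (r + 1 / r)) 0)

lemma lsiW_deriv (c r x : ℝ) : HasDerivAt (lsiW c r) (lsiW' c r x) x := by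
  unfold lsiW lsiW'
  have i1 : HasDerivAt (fun x => x - c) 1 x := (hasDerivAt_id x).sub_const c
  have h1 : HasDerivAt (fun x => max (x - c - (r + 1 / r)) 0 ^ 2) (2 * max (x - c - (r + 1 / r)) 0 * 1) x :=
    HasDerivAt.comp (h₂ := fun y => max y 0 ^ 2) x (lsi_max_sq (x - c - (r + 1 / r))) (i1.sub_const (r + 1 / r))
  have h2 : HasDerivAt (fun x => max (-(x - c) - (r + 1 / r)) 0 ^ 2) (2 * max (-(x - c) - (r + 1 / r)) 0 * (-1)) x :=
    HasDerivAt.comp (h₂ := fun y => max y 0 ^ 2) x (lsi_max_sq (-(x - c) - (r + 1 / r))) (i1.neg.sub_const (r + 1 / r))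
  have := (((i1.pow 2).const_mul (1 / (1 + r ^ 2))).div_const 2).add
    (((h1.add h2).const_mul (r ^ 2 / (1 + r ^ 2))).div_const 2)
  exact this.congr_deriv (by simp; ring)

lemma lsiW_conv (c r x y : ℝ) :
    lsiW c r x + lsiW' c r x * (y - x) + (1 / (1 + r ^ 2)) / 2 * (y - x) ^ 2 ≤ lsiW c r y := by
  unfold lsiW lsiW'
  have h1 := lsi_max_sq_conv (x - c - (r + 1 / r)) (y - c - (r + 1 / r))
  have h2 := lsi_max_sq_conv (-(x - c) - (r + 1 / r)) (-(y - c) - (r + 1 / r))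
  have hl : 0 ≤ r ^ 2 / (1 + r ^ 2) := by positivity
  have h3 := mul_le_mul_of_nonneg_left (add_le_add h1 h2) hl
  generalize r ^ 2 / (1 + r ^ 2) = l at *
  generalize 1 / (1 + r ^ 2) = k at *
  nlinarith

lemma lsiW_core (r y : ℝ) (hr : 0 < r) (hy : 0 ≤ y) :
    max (y - r) 0 ^ 2 / 2 ≤ (1 / (1 + r ^ 2)) * y ^ 2 / 2 + (r ^ 2 / (1 + r ^ 2)) * (max (y - (r + 1 / r)) 0 ^ 2) / 2 ∧
    (1 / (1 + r ^ 2)) * y ^ 2 / 2 + (r ^ 2 / (1 + r ^ 2)) * (max (y - (r + 1 / r)) 0 ^ 2) / 2 ≤ max (y - r) 0 ^ 2 / 2 + 1 / 2 := by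
  have hp : 0 < 1 / r := by positivity
  rcases le_total y r with h1 | h1
  · rw [max_eq_right (by linarith), max_eq_right (by linarith)]
    constructor
    · simp; positivity
    · have : 1 / (1 + r ^ 2) * y ^ 2 ≤ 1 := by
        rw [one_div_mul_eq_div, div_le_one (by positivity)]; nlinarith
      linarith
  have e : 1 / (1 + r ^ 2) * y ^ 2 = (y - r) ^ 2 + 1 - (1 + r ^ 2 - r * y) ^ 2 / (1 + r ^ 2) := by
    field_simp; ring
  rw [max_eq_left (by linarith : 0 ≤ y - r)]
  rcases le_total y (r + 1 / r) with h2 | h2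
  · rw [max_eq_right (by linarith), e]
    have h3 : r * y ≤ 1 + r ^ 2 := by
      have := mul_le_mul_of_nonneg_left h2 hr.le
      have e2 : r * (r + 1 / r) = r ^ 2 + 1 := by field_simp
      linarith
    have h4 : (1 + r ^ 2 - r * y) ^ 2 / (1 + r ^ 2) ≤ 1 := by
      rw [div_le_one (by positivity)]
      have : 1 + r ^ 2 - r * y ≤ 1 := by nlinarith
      nlinarith
    have h5 : 0 ≤ (1 + r ^ 2 - r * y) ^ 2 / (1 + r ^ 2) := by positivity
    constructor <;> linarith
  · rw [max_eq_left (by linarith)]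
    have : 1 / (1 + r ^ 2) * y ^ 2 + r ^ 2 / (1 + r ^ 2) * (y - (r + 1 / r)) ^ 2 = (y - r) ^ 2 + 1 := by
      field_simp; ring
    constructor <;> linarith

lemma lsiW_bounds (m x : ℝ) (hm : 0 < m) : lsiV m x ≤ lsiW (m / 2) (3 * m / 2) x ∧
    lsiW (m / 2) (3 * m / 2) x ≤ lsiV m x + 1 / 2 := by
  unfold lsiV lsiW
  set r := 3 * m / 2 with hr
  have hr0 : 0 < r := by positivity
  have hp : 0 < 1 / r := by positivity
  rcases le_total 0 (x - m / 2) with h | h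
  · have := lsiW_core r (x - m / 2) hr0 h
    rw [max_eq_right (by linarith : -m - x ≤ 0), max_eq_right (by linarith : -(x - m / 2) - (r + 1 / r) ≤ 0),
      show x - 2 * m = x - m / 2 - r by rw [hr]; ring]
    simpa using this
  · have := lsiW_core r (-(x - m / 2)) hr0 (by linarith)
    rw [max_eq_right (by linarith : x - 2 * m ≤ 0), max_eq_right (by linarith : (x - m / 2) - (r + 1 / r) ≤ 0),
      show -m - x = -(x - m / 2) - r by rw [hr]; ring]
    rw [neg_sq] at this
    simpa using this

/-- For m ≥ 4, the smoothed uniform density u_m on [−m, 2m]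
satisfies a log-Sobolev inequality with constant 16m². -/
theorem smoothed_uniform_log_sobolev
    (m : ℝ) (hm : 4 ≤ m) :
    ∀ f : ℝ → ℝ, ContDiff ℝ (⊤ : ℕ∞) f → HasCompactSupport f →
      (∫ x, (f x) ^ 2 * Real.log ((f x) ^ 2 / ∫ y, (f y) ^ 2 * smUnif m y) * smUnif m x)
        ≤ 2 * (16 * m ^ 2) * ∫ x, (deriv f x) ^ 2 * smUnif m x := by
  intro f hf hcs
  have hm0 : 0 < m := by linarith
  set N := 3 * m + √(2 * π) with hN
  have hN0 : 0 < N := by positivity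
  have hu : ∀ x, smUnif m x = exp (-lsiV m x) / N := by
    intro x
    unfold smUnif lsiV
    rw [neg_div, lsi_infDist m x hm0]
  have hVc := lsiV_cont m
  have hfc : Continuous f := hf.continuous
  have hfd : ∀ x, HasDerivAt f (deriv f x) x := fun x =>
    (hf.differentiable (by simp) x).hasDerivAt
  have hf'c : Continuous (deriv f) := hf.continuous_deriv (by simp)
  have hlogc : Continuous fun x => f x ^ 2 * log (f x ^ 2) := continuous_mul_log.comp (hfc.pow 2)
  set A := ∫ x, f x ^ 2 * exp (-lsiV m x) with hA
  have hM : ∫ y, f y ^ 2 * smUnif m y = A / N := by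
    simp only [hu, mul_div_assoc']
    rw [integral_div]
  rw [hM]
  have hA0 : 0 ≤ A := integral_nonneg fun x => by positivity
  set I := ∫ x, deriv f x ^ 2 * exp (-lsiV m x) with hI
  have hR : ∫ x, deriv f x ^ 2 * smUnif m x = I / N := by
    simp only [hu, mul_div_assoc']
    rw [integral_div]
  rw [hR]
  have hI0 : 0 ≤ I := integral_nonneg fun x => by positivity
  rcases hA0.eq_or_lt with hA1 | hApos
  · simp [← hA1]; positivity
  -- support
  obtain ⟨R0, hR0⟩ := hcs.isCompact.isBounded.subset_closedBall 0
  have hsupp : ∀ R, R0 < R → ∀ x, x ∉ Set.Ioc (-R) R → x ∉ tsupport f := by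
    intro R hR x hx hx'
    apply hx
    have := hR0 hx'
    rw [Metric.mem_closedBall, dist_zero_right, norm_eq_abs, abs_le] at this
    constructor <;> linarith [this.1, this.2]
  have hf0 : ∀ x, x ∉ tsupport f → f x = 0 := fun x => image_eq_zero_of_notMem_tsupport
  have hf0' : ∀ x, x ∉ tsupport f → deriv f x = 0 := fun x hx =>
    image_eq_zero_of_notMem_tsupport (fun h => hx (tsupport_deriv_subset h))
  have hinterval : ∀ R, 0 < R → R0 < R → ∀ g : ℝ → ℝ, (∀ x, x ∉ tsupport f → g x = 0) →
      ∫ x in (-R)..R, g x = ∫ x, g x := by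
    intro R h0 hR g hg
    rw [intervalIntegral.integral_of_le (by linarith)]
    exact setIntegral_eq_integral_of_forall_compl_eq_zero fun x hx => hg x (hsupp R hR x hx)
  set L := ∫ x, f x ^ 2 * log (f x ^ 2) * exp (-lsiV m x) with hL
  have hint : ∀ g : ℝ → ℝ, Continuous g → (∀ x, x ∉ tsupport f → g x = 0) → Integrable g := by
    intro g hg h0
    apply hg.integrable_of_hasCompactSupport
    exact HasCompactSupport.of_support_subset_isCompact hcs.isCompact
      (fun x hx => by by_contra h; exact hx (h0 x h))
  have hsplit : ∀ e : ℝ, 0 < e → ∫ x, f x ^ 2 * log (f x ^ 2 / e) * exp (-lsiV m x) = L - log e * A := by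
    intro e he
    have h1 : ∀ x, f x ^ 2 * log (f x ^ 2 / e) * exp (-lsiV m x) =
        f x ^ 2 * log (f x ^ 2) * exp (-lsiV m x) - log e * (f x ^ 2 * exp (-lsiV m x)) := by
      intro x
      by_cases h0 : f x = 0
      · simp [h0]
      rw [log_div (by positivity) he.ne']; ring
    simp only [h1]
    rw [integral_sub, integral_const_mul]
    · exact hint _ (by fun_prop) (fun x hx => by simp [hf0 x hx])
    · exact (hint _ (by fun_prop) (fun x hx => by simp [hf0 x hx])).const_mul _
  obtain ⟨hVi, hVe⟩ := lsiV_integral m hm0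
  set K := exp (1 / 2) * (2 / (1 / (1 + (3 * m / 2) ^ 2))) with hK
  have hineq : ∀ R, 0 < R → R0 < R →
      L - log (A / ∫ x in (-R)..R, exp (-lsiV m x)) * A ≤ K * I := by
    intro R h0 hR
    have hB : 0 < ∫ x in (-R)..R, exp (-lsiV m x) :=
      intervalIntegral.intervalIntegral_pos_of_pos
        ((by fun_prop : Continuous fun x => exp (-lsiV m x)).intervalIntegrable _ _)
        (fun x => exp_pos _) (by linarith)
    set c := A / ∫ x in (-R)..R, exp (-lsiV m x) with hc
    have hc0 : 0 < c := by positivity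
    have := lsi_hs (lsiV m) (lsiW (m / 2) (3 * m / 2)) (lsiW' (m / 2) (3 * m / 2)) f (deriv f)
      (1 / (1 + (3 * m / 2) ^ 2)) (1 / 2) (by positivity) hVc (lsiW_deriv _ _)
      (by unfold lsiW'; fun_prop) (lsiW_conv _ _) (fun x => (lsiW_bounds m x hm0).1)
      (fun x => (lsiW_bounds m x hm0).2) hfd hf'c (-R) R (by linarith) c hc0 (by
        rw [hinterval R h0 hR _ (fun x hx => by simp [hf0 x hx]), hc]
        field_simp
        rfl)
    rw [hinterval R h0 hR _ (fun x hx => by simp [hf0 x hx]),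
      hinterval R h0 hR _ (fun x hx => by simp [hf0' x hx]), hsplit c hc0] at this
    exact this
  have hlim : L - log (A / N) * A ≤ K * I := by
    have ht : Filter.Tendsto (fun R : ℝ => ∫ x in (-R)..R, exp (-lsiV m x)) Filter.atTop (nhds N) := by
      rw [hN, ← hVe]
      exact intervalIntegral_tendsto_integral hVi Filter.tendsto_neg_atTop_atBot Filter.tendsto_id
    have ht2 : Filter.Tendsto (fun R : ℝ => L - log (A / ∫ x in (-R)..R, exp (-lsiV m x)) * A)
        Filter.atTop (nhds (L - log (A / N) * A)) := by
      have h1 := (tendsto_const_nhds (x := A)).div ht hN0.ne'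
      exact ((h1.log (by positivity)).mul_const A).const_sub L
    apply le_of_tendsto ht2
    filter_upwards [Filter.eventually_gt_atTop 0, Filter.eventually_gt_atTop R0] with R h1 h2
    exact hineq R h1 h2
  have hKle : K ≤ 2 * (16 * m ^ 2) := by
    have he : exp (1 / 2) ≤ 2 := by
      have h1 : exp (1 / 2) * exp (1 / 2) = exp 1 := by rw [← exp_add]; norm_num
      have := Real.exp_one_lt_d9
      nlinarith [exp_pos (1 / 2 : ℝ)]
    have e1 : 2 / (1 / (1 + (3 * m / 2) ^ 2)) = 2 * (1 + (3 * m / 2) ^ 2) := by field_simp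
    rw [hK, e1]
    calc _ ≤ 2 * (2 * (1 + (3 * m / 2) ^ 2)) := by gcongr
      _ ≤ _ := by nlinarith
  simp only [hu, mul_div_assoc']
  rw [integral_div, hsplit _ (by positivity)]
  gcongr
  exact hlim.trans (by gcongr)
end

section
/- Let m ≥ 10, let g_m(x) = (2π)^{−1/2} e^{−(x−m)²/2} be the density of N(m,1), and let u_m(x) = e^{−d(x,[−m,2m])²/2} / (3m + √(2π)). Then the chi-squared divergence of N(m,1) from u_m satisfies χ²(N(m,1), u_m) + 1 = ∫_ℝ g_m(x)² / u_m(x) dx ≤ 5m. -/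
open MeasureTheory Real

/-- For m ≥ 10, the chi-squared divergence of N(m,1) from u_m satisfies
χ²(N(m,1), u_m) + 1 = ∫ g_m²/u_m ≤ 5m. -/
theorem chi_squared_gaussian_smoothed_uniform_le
    (m : ℝ) (hm : 10 ≤ m) :
    (∫ x, (gaussAt m x) ^ 2 / smUnif m x) ≤ 5 * m := by
  have hs1 : 1 ≤ Real.sqrt (2 * Real.pi) := by
    rw [Real.one_le_sqrt]
    linarith [Real.pi_gt_three]
  have hs0 : 0 < Real.sqrt (2 * Real.pi) := by linarith
  have hC : 0 < 3 * m + Real.sqrt (2 * Real.pi) := by linarith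
  have hint : Integrable (fun x : ℝ => Real.exp (-(1 / 2) * (x - m) ^ 2)) :=
    (integrable_exp_neg_mul_sq (b := 1 / 2) (by norm_num)).comp_sub_right m
  have hval : (∫ x : ℝ, Real.exp (-(1 / 2) * (x - m) ^ 2)) = Real.sqrt (2 * Real.pi) := by
    rw [integral_sub_right_eq_self (fun x : ℝ => Real.exp (-(1 / 2) * x ^ 2)) m,
      integral_gaussian]
    congr 1
    ring
  have hle : (∫ x, (gaussAt m x) ^ 2 / smUnif m x) ≤
      ∫ x : ℝ, ((3 * m + Real.sqrt (2 * Real.pi)) / (Real.sqrt (2 * Real.pi)) ^ 2) *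
        Real.exp (-(1 / 2) * (x - m) ^ 2) := by
    apply integral_mono_of_nonneg
    · refine Filter.Eventually.of_forall fun x => ?_
      simp only [gaussAt, smUnif, Pi.zero_apply]
      positivity
    · exact hint.const_mul _
    · refine Filter.Eventually.of_forall fun x => ?_
      simp only [gaussAt, smUnif]
      set d := Metric.infDist x (Set.Icc (-m) (2 * m)) with hd
      have hd0 : 0 ≤ d := Metric.infDist_nonneg
      have hd1 : d ≤ |x - m| := by
        rw [← Real.dist_eq]
        exact Metric.infDist_le_dist_of_mem ⟨by linarith, by linarith⟩
      have hd2 : d ^ 2 ≤ (x - m) ^ 2 := by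
        rw [← sq_abs (x - m)]
        gcongr
      have hexp : Real.exp (-(x - m) ^ 2 / 2) ^ 2 ≤
          Real.exp (-(1 / 2) * (x - m) ^ 2) * Real.exp (-d ^ 2 / 2) := by
        rw [← Real.exp_nat_mul, ← Real.exp_add]
        apply Real.exp_le_exp.mpr
        push_cast
        linarith
      have he := Real.exp_pos (-d ^ 2 / 2)
      rw [div_pow, div_le_iff₀ (by positivity)]
      calc _ ≤ (Real.exp (-(1 / 2) * (x - m) ^ 2) * Real.exp (-d ^ 2 / 2)) /
            Real.sqrt (2 * Real.pi) ^ 2 := by gcongr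
        _ = _ := by field_simp
  refine hle.trans ?_
  rw [integral_const_mul, hval]
  have : (3 * m + Real.sqrt (2 * Real.pi)) / (Real.sqrt (2 * Real.pi)) ^ 2 *
      Real.sqrt (2 * Real.pi) = (3 * m + Real.sqrt (2 * Real.pi)) / Real.sqrt (2 * Real.pi) := by
    field_simp
  rw [this, div_le_iff₀ hs0]
  nlinarith
end

section
/- Let m ≥ 11, let ν(x) = (2π)^{−1/2} e^{−x²/2}, and let π(x) = (1/2)ν(x) + (1/2) g_m(x) where g_m(x) = (2π)^{−1/2} e^{−(x−m)²/2}. For λ ∈ [0,1], let μ_λ be the probability density proportional to ν^{1−λ} π^λ. Then the mass of μ_λ on the interval [m/4, 3m/4] satisfies μ_λ([m/4, 3m/4]) = ( ∫_{m/4}^{3m/4} ν^{1−λ} π^λ dx ) / ( ∫_ℝ ν^{1−λ} π^λ dx ) ≤ 6 e^{−m²/32}. -/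
open MeasureTheory Real

/-- The standard Gaussian density on ℝ. -/
noncomputable def stdGauss (x : ℝ) : ℝ := Real.exp (-x ^ 2 / 2) / Real.sqrt (2 * Real.pi)

/-- The bimodal target π = (1/2)N(0,1) + (1/2)N(m,1). -/
noncomputable def bimodal (m x : ℝ) : ℝ := (1 / 2) * stdGauss x + (1 / 2) * gaussAt m x

lemma aux_integrable (c : ℝ) : Integrable (fun x : ℝ => Real.exp (-(x - c) ^ 2 / 2)) := by
  have h := (integrable_exp_neg_mul_sq (b := 1 / 2) (by norm_num)).comp_sub_right c
  refine h.congr (Filter.Eventually.of_forall fun x => ?_)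
  show Real.exp _ = Real.exp _
  congr 1; ring

lemma aux_integral (c : ℝ) :
    ∫ x : ℝ, Real.exp (-(x - c) ^ 2 / 2) = Real.sqrt (2 * Real.pi) := by
  have h := integral_gaussian (1 / 2)
  rw [← integral_sub_right_eq_self (fun x : ℝ => Real.exp (-(1 / 2) * x ^ 2)) c] at h
  rw [show Real.pi / (1 / 2) = 2 * Real.pi by ring] at h
  rw [← h]
  congr 1; funext x; congr 1; ring

lemma aux_form (m lam x : ℝ) :
    (stdGauss x) ^ (1 - lam) * (bimodal m x) ^ lam =
      ((1 / 2 : ℝ) ^ lam / Real.sqrt (2 * Real.pi)) *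
        (Real.exp (-x ^ 2 / 2) * (1 + Real.exp (m * x - m ^ 2 / 2)) ^ lam) := by
  have hs : 0 < stdGauss x := by unfold stdGauss; positivity
  have hb : bimodal m x = stdGauss x * ((1 / 2) * (1 + Real.exp (m * x - m ^ 2 / 2))) := by
    have : Real.exp (-(x - m) ^ 2 / 2) =
        Real.exp (-x ^ 2 / 2) * Real.exp (m * x - m ^ 2 / 2) := by
      rw [← Real.exp_add]; congr 1; ring
    unfold bimodal stdGauss gaussAt
    rw [this]; ring
  rw [hb, Real.mul_rpow hs.le (by positivity), ← mul_assoc, ← Real.rpow_add hs,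
    Real.mul_rpow (by norm_num) (by positivity)]
  simp only [sub_add_cancel, Real.rpow_one]
  unfold stdGauss
  ring

lemma aux_upper (m lam x : ℝ) (h0 : 0 ≤ lam) (h1 : lam ≤ 1) :
    Real.exp (-x ^ 2 / 2) * (1 + Real.exp (m * x - m ^ 2 / 2)) ^ lam ≤
      Real.exp (-x ^ 2 / 2) + Real.exp (-(x ^ 2 - 2 * lam * m * x + lam * m ^ 2) / 2) := by
  have h := Real.rpow_add_le_add_rpow (p := lam) (zero_le_one) (Real.exp_pos (m * x - m ^ 2 / 2)).le h0 h1
  rw [Real.one_rpow, ← Real.exp_mul] at h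
  calc _ ≤ Real.exp (-x ^ 2 / 2) * (1 + Real.exp ((m * x - m ^ 2 / 2) * lam)) := by gcongr
    _ = _ := by
      rw [mul_add, mul_one, ← Real.exp_add]
      congr 2; ring

lemma aux_mid (m lam : ℝ) (hm : 0 ≤ m) (h0 : 0 ≤ lam) (h1 : lam ≤ 1) :
    ∃ c : ℝ, ∀ x ∈ Set.Icc (m / 4) (3 * m / 4),
      m ^ 2 / 16 + (x - c) ^ 2 ≤ x ^ 2 - 2 * lam * m * x + lam * m ^ 2 := by
  rcases le_total lam (1 / 4) with h | h
  · refine ⟨m / 4, fun x hx => ?_⟩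
    have a := mul_nonneg (mul_nonneg hm (sub_nonneg.2 hx.1)) (sub_nonneg.2 h)
    have b := mul_nonneg h0 (sq_nonneg m)
    nlinarith
  rcases le_total lam (3 / 4) with hq | hq
  · refine ⟨lam * m, fun x hx => ?_⟩
    have a := mul_nonneg (mul_nonneg (sub_nonneg.2 h) (sub_nonneg.2 hq)) (sq_nonneg m)
    nlinarith [sq_nonneg m]
  · refine ⟨3 * m / 4, fun x hx => ?_⟩
    have a := mul_nonneg (mul_nonneg hm (sub_nonneg.2 hx.2)) (sub_nonneg.2 hq)
    have b := mul_nonneg (sub_nonneg.2 h1) (sq_nonneg m)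
    nlinarith

/-- For m ≥ 11, ν = N(0,1), π = (1/2)N(0,1) + (1/2)N(m,1) and λ ∈ [0,1],
the geometric tempering μ_λ ∝ ν^{1−λ}π^λ puts mass at most 6e^{−m²/32} on [m/4, 3m/4]. -/
theorem bimodal_tempering_middle_mass_bound
    (m : ℝ) (hm : 11 ≤ m) (lam : ℝ) (hlam : lam ∈ Set.Icc (0 : ℝ) 1) :
    (∫ x in Set.Icc (m / 4) (3 * m / 4), (stdGauss x) ^ (1 - lam) * (bimodal m x) ^ lam)
        / (∫ x, (stdGauss x) ^ (1 - lam) * (bimodal m x) ^ lam)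
      ≤ 6 * Real.exp (-m ^ 2 / 32) := by
  obtain ⟨h0, h1⟩ := hlam
  have hm0 : 0 ≤ m := by linarith
  simp only [aux_form, integral_const_mul]
  have hK : (0 : ℝ) < (1 / 2 : ℝ) ^ lam / Real.sqrt (2 * Real.pi) := by positivity
  rw [mul_div_mul_left _ _ hK.ne']
  set w : ℝ → ℝ := fun x =>
    Real.exp (-x ^ 2 / 2) * (1 + Real.exp (m * x - m ^ 2 / 2)) ^ lam with hw
  have hS : 0 < Real.sqrt (2 * Real.pi) := by positivity
  have i0 : Integrable (fun x : ℝ => Real.exp (-x ^ 2 / 2)) := by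
    simpa using aux_integrable 0
  have e0 : ∫ x : ℝ, Real.exp (-x ^ 2 / 2) = Real.sqrt (2 * Real.pi) := by
    simpa using aux_integral 0
  have wnn : ∀ x, 0 ≤ w x := fun x => by simp only [hw]; positivity
  have wcont : Continuous w := by
    refine Continuous.mul (by fun_prop) (Continuous.rpow_const (by fun_prop) fun x => Or.inr h0)
  have i2 : Integrable (fun x : ℝ =>
      Real.exp (-(x ^ 2 - 2 * lam * m * x + lam * m ^ 2) / 2)) := by
    refine ((aux_integrable (lam * m)).const_mul
      (Real.exp ((lam ^ 2 * m ^ 2 - lam * m ^ 2) / 2))).congr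
      (Filter.Eventually.of_forall fun x => ?_)
    show Real.exp _ * Real.exp _ = Real.exp _
    rw [← Real.exp_add]; congr 1; ring
  have wint : Integrable w := by
    refine (i0.add i2).mono' wcont.aestronglyMeasurable (Filter.Eventually.of_forall fun x => ?_)
    rw [Real.norm_of_nonneg (wnn x)]
    exact aux_upper m lam x h0 h1
  have hD : Real.sqrt (2 * Real.pi) ≤ ∫ x, w x := by
    rw [← e0]
    refine integral_mono i0 wint fun x => ?_
    refine le_mul_of_one_le_right (Real.exp_pos _).le (Real.one_le_rpow ?_ h0)
    linarith [Real.exp_pos (m * x - m ^ 2 / 2)]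
  obtain ⟨c, hc⟩ := aux_mid m lam hm0 h0 h1
  have hN : ∫ x in Set.Icc (m / 4) (3 * m / 4), w x ≤
      2 * Real.exp (-m ^ 2 / 32) * Real.sqrt (2 * Real.pi) := by
    have ib : Integrable (fun x : ℝ => Real.exp (-m ^ 2 / 32) *
        (Real.exp (-(x - m / 4) ^ 2 / 2) + Real.exp (-(x - c) ^ 2 / 2))) :=
      ((aux_integrable (m / 4)).add (aux_integrable c)).const_mul _
    calc _ ≤ ∫ x in Set.Icc (m / 4) (3 * m / 4), Real.exp (-m ^ 2 / 32) *
        (Real.exp (-(x - m / 4) ^ 2 / 2) + Real.exp (-(x - c) ^ 2 / 2)) := by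
          refine setIntegral_mono_on wint.integrableOn ib.integrableOn measurableSet_Icc
            fun x hx => (aux_upper m lam x h0 h1).trans ?_
          rw [mul_add, ← Real.exp_add, ← Real.exp_add]
          have := hc x hx
          have := mul_nonneg hm0 (sub_nonneg.2 hx.1)
          refine add_le_add (Real.exp_le_exp.2 ?_) (Real.exp_le_exp.2 ?_)
          · nlinarith
          · linarith
      _ ≤ ∫ x, Real.exp (-m ^ 2 / 32) *
        (Real.exp (-(x - m / 4) ^ 2 / 2) + Real.exp (-(x - c) ^ 2 / 2)) :=
          setIntegral_le_integral ib (Filter.Eventually.of_forall fun x => by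
            show (0 : ℝ) ≤ _
            positivity)
      _ = _ := by
          rw [integral_const_mul, integral_add (aux_integrable _) (aux_integrable _),
            aux_integral, aux_integral]
          ring
  rw [div_le_iff₀ (hS.trans_le hD)]
  have hE := Real.exp_pos (-m ^ 2 / 32)
  calc _ ≤ _ := hN
    _ ≤ 6 * Real.exp (-m ^ 2 / 32) * Real.sqrt (2 * Real.pi) := by
      gcongr; norm_num
    _ ≤ _ := by gcongr
end

section
/- Let m ≥ 10 and a ∈ [ √(2 log 2)/m, 1 ]. Let ν(x) = (2π)^{−1/2} e^{−x²/2}, and π(x) = (1 − e^{−a²m²/2}) g_m(x) + e^{−a²m²/2} u_m(x), where g_m(x) = (2π)^{−1/2} e^{−(x−m)²/2} and u_m(x) = e^{−d(x,[−m,2m])²/2} / (3m + √(2π)). Then for every λ ∈ [0,1], ∫_{m(1−a)/2}^{m(1−a)} ν(x)^{1−λ} π(x)^λ dx ≤ 5 a m² · e^{ −λ a² m²/2 − (1−λ)(1−a)² m²/8 }. -/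
open MeasureTheory Real

/-- For m ≥ 10, a ∈ [√(2 log 2)/m, 1] and λ ∈ [0,1],
∫_{m(1−a)/2}^{m(1−a)} ν^{1−λ}π^λ ≤ 5am²·e^{−λa²m²/2 − (1−λ)(1−a)²m²/8}. -/
theorem unimodal_tempering_middle_unnormalized_mass_upper_bound
    (m a : ℝ) (hm : 10 ≤ m)
    (ha : a ∈ Set.Icc (Real.sqrt (2 * Real.log 2) / m) 1)
    (lam : ℝ) (hlam : lam ∈ Set.Icc (0 : ℝ) 1) :
    (∫ x in Set.Icc (m * (1 - a) / 2) (m * (1 - a)),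
        (stdGauss x) ^ (1 - lam) * (piDensA m a x) ^ lam)
      ≤ 5 * a * m ^ 2
          * Real.exp (-(lam * a ^ 2 * m ^ 2) / 2 - (1 - lam) * (1 - a) ^ 2 * m ^ 2 / 8) := by
  obtain ⟨ha1, ha2⟩ := ha
  obtain ⟨hl0, hl1⟩ := hlam
  have hm0 : 0 < m := by linarith
  have ham : 1 ≤ a * m := by
    have h1 : 1 ≤ Real.sqrt (2 * Real.log 2) := by
      rw [Real.one_le_sqrt]
      have := Real.log_two_gt_d9
      linarith
    rw [div_le_iff₀ hm0] at ha1
    linarith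
  have hs : 2 ≤ Real.sqrt (2 * Real.pi) := by
    apply Real.le_sqrt_of_sq_le
    have := Real.pi_gt_three
    linarith
  have hs0 : 0 < Real.sqrt (2 * Real.pi) := by linarith
  have h1a : 0 ≤ 1 - a := by linarith
  have hE1 : Real.exp (-(a ^ 2 * m ^ 2) / 2) ≤ 1 := by
    rw [Real.exp_le_one_iff]
    have : 0 ≤ a ^ 2 * m ^ 2 := by positivity
    linarith
  have key : ∀ x ∈ Set.Icc (m * (1 - a) / 2) (m * (1 - a)),
      ‖(stdGauss x) ^ (1 - lam) * (piDensA m a x) ^ lam‖ ≤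
        Real.exp (-(lam * a ^ 2 * m ^ 2) / 2 - (1 - lam) * (1 - a) ^ 2 * m ^ 2 / 8) := by
    intro x hx
    obtain ⟨hx1, hx2⟩ := hx
    have hn0 : 0 ≤ stdGauss x := by unfold stdGauss; positivity
    have hg0 : 0 ≤ gaussAt m x := by unfold gaussAt; positivity
    have hu0 : 0 ≤ smUnif m x := by unfold smUnif; positivity
    have hp0 : 0 ≤ piDensA m a x := by
      unfold piDensA
      have : 0 ≤ 1 - Real.exp (-(a ^ 2 * m ^ 2) / 2) := by linarith
      positivity
    have hn : stdGauss x ≤ Real.exp (-((1 - a) ^ 2 * m ^ 2) / 8) := by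
      unfold stdGauss
      refine (div_le_self (Real.exp_pos _).le (by linarith)).trans ?_
      rw [Real.exp_le_exp]
      have h0 : 0 ≤ m * (1 - a) / 2 := by positivity
      have := pow_le_pow_left₀ h0 hx1 2
      nlinarith
    have hg : gaussAt m x ≤ Real.exp (-(a ^ 2 * m ^ 2) / 2) / 2 := by
      unfold gaussAt
      refine div_le_div₀ (Real.exp_pos _).le ?_ (by norm_num) hs
      rw [Real.exp_le_exp]
      have h0 : a * m ≤ m - x := by nlinarith
      have := pow_le_pow_left₀ (by linarith) h0 2
      nlinarith
    have hu : smUnif m x ≤ 1 / 2 := by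
      unfold smUnif
      refine div_le_div₀ zero_le_one ?_ (by norm_num) (by linarith)
      rw [Real.exp_le_one_iff]
      have := sq_nonneg (Metric.infDist x (Set.Icc (-m) (2 * m)))
      linarith
    have hp : piDensA m a x ≤ Real.exp (-(a ^ 2 * m ^ 2) / 2) := by
      unfold piDensA
      have hE := Real.exp_pos (-(a ^ 2 * m ^ 2) / 2)
      have := mul_nonneg hE.le hg0
      have := mul_le_mul_of_nonneg_left hu hE.le
      linarith
    rw [Real.norm_of_nonneg (by positivity)]
    calc _ ≤ (Real.exp (-((1 - a) ^ 2 * m ^ 2) / 8)) ^ (1 - lam)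
          * (Real.exp (-(a ^ 2 * m ^ 2) / 2)) ^ lam := by
          have := Real.rpow_le_rpow hn0 hn (sub_nonneg.2 hl1)
          have := Real.rpow_le_rpow hp0 hp hl0
          gcongr
      _ = _ := by
          rw [← Real.exp_mul, ← Real.exp_mul, ← Real.exp_add]
          congr 1
          ring
  have hb := norm_setIntegral_le_of_norm_le_const (μ := volume)
    (by rw [Real.volume_Icc]; exact ENNReal.ofReal_lt_top) key
  refine (le_abs_self _).trans (hb.trans ?_)
  rw [mul_comm]
  refine mul_le_mul_of_nonneg_right ?_ (Real.exp_pos _).le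
  rw [Real.volume_real_Icc_of_le (by nlinarith)]
  nlinarith
end

section
/- Let m ≥ 10 and a ∈ [ √(2 log 2)/m, 1 ] with 1 ≥ a + 2/m. Let ν(x) = (2π)^{−1/2} e^{−x²/2}, and π(x) = (1 − e^{−a²m²/2}) g_m(x) + e^{−a²m²/2} u_m(x), where g_m(x) = (2π)^{−1/2} e^{−(x−m)²/2} and u_m(x) = e^{−d(x,[−m,2m])²/2} / (3m + √(2π)). Then for every λ ∈ [0,1], ∫_{−∞}^{m(1−a)/2} ν(x)^{1−λ} π(x)^λ dx ≥ e^{−λ a² m²/2} / (10 m). -/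
open MeasureTheory Real

lemma aux_smUnif_int (m : ℝ) (hm : 10 ≤ m) : Integrable (smUnif m) := by
  unfold smUnif
  apply Integrable.div_const
  have hg : Integrable (fun x : ℝ => Real.exp (2 * m ^ 2) * Real.exp (-(1 / 4) * x ^ 2)) :=
    (integrable_exp_neg_mul_sq (by norm_num : (0 : ℝ) < 1 / 4)).const_mul _
  refine hg.mono' ?_ ?_
  · apply Continuous.aestronglyMeasurable
    have := Metric.continuous_infDist_pt (Set.Icc (-m) (2 * m))
    fun_prop
  · refine Filter.Eventually.of_forall fun x => ?_
    rw [Real.norm_eq_abs, abs_of_pos (Real.exp_pos _), ← Real.exp_add]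
    apply Real.exp_le_exp.mpr
    have h1 : |x| - 2 * m ≤ Metric.infDist x (Set.Icc (-m) (2 * m)) := by
      refine (Metric.le_infDist (Set.nonempty_Icc.mpr (by linarith))).mpr ?_
      rintro y ⟨hy1, hy2⟩
      rw [Real.dist_eq]
      have : |y| ≤ 2 * m := abs_le.mpr ⟨by linarith, hy2⟩
      linarith [abs_sub_abs_le_abs_sub x y]
    have h0 : 0 ≤ Metric.infDist x (Set.Icc (-m) (2 * m)) := Metric.infDist_nonneg
    generalize Metric.infDist x (Set.Icc (-m) (2 * m)) = d at *
    have h2 : |x| ^ 2 ≤ (d + 2 * m) ^ 2 := by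
      apply pow_le_pow_left₀ (abs_nonneg x); linarith
    rw [sq_abs] at h2
    nlinarith [sq_nonneg (d - 2 * m)]

lemma aux_gaussAt_int (m : ℝ) : Integrable (gaussAt m) := by
  unfold gaussAt
  apply Integrable.div_const
  have h := (integrable_exp_neg_mul_sq (by norm_num : (0 : ℝ) < 1 / 2)).comp_sub_right m
  refine h.congr (Filter.Eventually.of_forall fun x => ?_)
  simp only
  congr 1
  ring

lemma aux_gauss_int : Integrable stdGauss := by
  have h := aux_gaussAt_int 0
  unfold gaussAt at h
  simp only [sub_zero] at h
  exact h

lemma aux_smUnif_cont (m : ℝ) : Continuous (smUnif m) := by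
  unfold smUnif
  have := Metric.continuous_infDist_pt (Set.Icc (-m) (2 * m))
  fun_prop

lemma aux_sqrt_le : Real.sqrt (2 * Real.pi) ≤ 3 := by
  rw [Real.sqrt_le_left (by norm_num)]
  linarith [Real.pi_lt_four]

/-- For m ≥ 10, a ∈ [√(2 log 2)/m, 1] with a + 2/m ≤ 1, and λ ∈ [0,1],
∫_{−∞}^{m(1−a)/2} ν^{1−λ}π^λ ≥ e^{−λa²m²/2}/(10m). -/
theorem unimodal_tempering_left_unnormalized_mass_lower_bound
    (m a : ℝ) (hm : 10 ≤ m)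
    (ha : a ∈ Set.Icc (Real.sqrt (2 * Real.log 2) / m) 1)
    (ha2 : a + 2 / m ≤ 1)
    (lam : ℝ) (hlam : lam ∈ Set.Icc (0 : ℝ) 1) :
    Real.exp (-(lam * a ^ 2 * m ^ 2) / 2) / (10 * m)
      ≤ ∫ x in Set.Iic (m * (1 - a) / 2),
          (stdGauss x) ^ (1 - lam) * (piDensA m a x) ^ lam := by
  obtain ⟨hl0, hl1⟩ := hlam
  have hs3 := aux_sqrt_le
  have hs0 : 0 < Real.sqrt (2 * Real.pi) := by positivity
  have hm0 : 0 < m := by linarith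
  have hE1 : Real.exp (-(a ^ 2 * m ^ 2) / 2) ≤ 1 := by
    rw [Real.exp_le_one_iff]
    have : 0 ≤ a ^ 2 * m ^ 2 := by positivity
    linarith
  have hE0 := Real.exp_pos (-(a ^ 2 * m ^ 2) / 2)
  have hg0 : ∀ x, 0 ≤ stdGauss x := fun x => by unfold stdGauss; positivity
  have hga0 : ∀ x, 0 ≤ gaussAt m x := fun x => by unfold gaussAt; positivity
  have hu0 : ∀ x, 0 ≤ smUnif m x := fun x => by unfold smUnif; positivity
  have hp0 : ∀ x, 0 ≤ piDensA m a x := fun x =>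
    add_nonneg (mul_nonneg (by linarith) (hga0 x)) (mul_nonneg hE0.le (hu0 x))
  have hgc : Continuous stdGauss := by unfold stdGauss; fun_prop
  have hpc : Continuous (piDensA m a) := by
    have h1 : Continuous (gaussAt m) := by unfold gaussAt; fun_prop
    have h2 := aux_smUnif_cont m
    unfold piDensA
    fun_prop
  have hpi : Integrable (piDensA m a) :=
    ((aux_gaussAt_int m).const_mul _).add ((aux_smUnif_int m hm).const_mul _)
  have hF0 : ∀ x, 0 ≤ (stdGauss x) ^ (1 - lam) * (piDensA m a x) ^ lam := fun x =>
    mul_nonneg (Real.rpow_nonneg (hg0 x) _) (Real.rpow_nonneg (hp0 x) _)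
  have hFi : Integrable (fun x => (stdGauss x) ^ (1 - lam) * (piDensA m a x) ^ lam) := by
    refine ((aux_gauss_int.const_mul (1 - lam)).add (hpi.const_mul lam)).mono' ?_ ?_
    · apply Continuous.aestronglyMeasurable
      exact (hgc.rpow_const fun x => Or.inr (by linarith)).mul
        (hpc.rpow_const fun x => Or.inr hl0)
    · refine Filter.Eventually.of_forall fun x => ?_
      rw [Real.norm_eq_abs, abs_of_nonneg (hF0 x)]
      exact Real.geom_mean_le_arith_mean2_weighted (by linarith) hl0 (hg0 x) (hp0 x) (by ring)
  have hsub : Set.Icc (0 : ℝ) 1 ⊆ Set.Iic (m * (1 - a) / 2) := by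
    rintro x ⟨_, hx⟩
    have h : m * (a + 2 / m) ≤ m * 1 := mul_le_mul_of_nonneg_left ha2 hm0.le
    have h' : m * (a + 2 / m) = m * a + 2 := by field_simp
    simp only [Set.mem_Iic]
    linarith
  have hD : 0 < 10 * m := by positivity
  have key : ∀ x ∈ Set.Icc (0 : ℝ) 1, Real.exp (-(lam * a ^ 2 * m ^ 2) / 2) / (10 * m) ≤
      (stdGauss x) ^ (1 - lam) * (piDensA m a x) ^ lam := by
    rintro x ⟨hx0, hx1⟩
    have h1 : 1 / (10 * m) ≤ stdGauss x := by
      unfold stdGauss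
      have he : (1 / 2 : ℝ) ≤ Real.exp (-x ^ 2 / 2) := by
        have := Real.add_one_le_exp (-x ^ 2 / 2)
        nlinarith
      rw [div_le_div_iff₀ hD hs0]
      nlinarith
    have h2 : Real.exp (-(a ^ 2 * m ^ 2) / 2) * (1 / (10 * m)) ≤ piDensA m a x := by
      unfold piDensA
      have hu : 1 / (10 * m) ≤ smUnif m x := by
        unfold smUnif
        rw [Metric.infDist_zero_of_mem (Set.mem_Icc.mpr ⟨by linarith, by linarith⟩)]
        simp only [ne_eq, OfNat.ofNat_ne_zero, not_false_eq_true, zero_pow, neg_zero, zero_div,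
          Real.exp_zero]
        exact one_div_le_one_div_of_le (by positivity) (by linarith)
      have := mul_le_mul_of_nonneg_left hu hE0.le
      have := mul_nonneg (sub_nonneg.mpr hE1) (hga0 x)
      linarith
    have hq : 0 < 1 / (10 * m) := by positivity
    calc Real.exp (-(lam * a ^ 2 * m ^ 2) / 2) / (10 * m)
        = (1 / (10 * m)) ^ (1 - lam) *
          (Real.exp (-(a ^ 2 * m ^ 2) / 2) * (1 / (10 * m))) ^ lam := by
          rw [Real.mul_rpow hE0.le hq.le, ← Real.exp_mul, mul_left_comm, ← Real.rpow_add hq,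
            sub_add_cancel, Real.rpow_one, mul_one_div]
          congr 2
          ring
      _ ≤ _ := mul_le_mul (Real.rpow_le_rpow hq.le h1 (by linarith))
          (Real.rpow_le_rpow (by positivity) h2 hl0) (by positivity)
          (Real.rpow_nonneg (hg0 x) _)
  calc Real.exp (-(lam * a ^ 2 * m ^ 2) / 2) / (10 * m)
      = ∫ x in Set.Icc (0 : ℝ) 1, Real.exp (-(lam * a ^ 2 * m ^ 2) / 2) / (10 * m) := by
        simp
    _ ≤ ∫ x in Set.Icc (0 : ℝ) 1, (stdGauss x) ^ (1 - lam) * (piDensA m a x) ^ lam :=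
        setIntegral_mono_on (by simp) hFi.integrableOn measurableSet_Icc key
    _ ≤ _ := setIntegral_mono_set hFi.integrableOn
        (Filter.Eventually.of_forall hF0) hsub.eventuallyLE
end

section
/- Let m ≥ 10 and a ∈ [ √(2 log 2)/m, 1 ]. Let ν(x) = (2π)^{−1/2} e^{−x²/2}, and π(x) = (1 − e^{−a²m²/2}) g_m(x) + e^{−a²m²/2} u_m(x), where g_m(x) = (2π)^{−1/2} e^{−(x−m)²/2} and u_m(x) = e^{−d(x,[−m,2m])²/2} / (3m + √(2π)). Then for every λ ∈ [0,1] such that 1 ≤ a + 2λ − 2/m, ∫_{m(1−a)/2}^{∞} ν(x)^{1−λ} π(x)^λ dx ≥ (1/2) e^{ −λ(1−λ) m²/2 }. -/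
open MeasureTheory Real

namespace UTaux

noncomputable def phi (x : ℝ) : ℝ := Real.exp (-x ^ 2 / 2) / Real.sqrt (2 * Real.pi)

lemma sq_pos : 0 < Real.sqrt (2 * Real.pi) := by positivity

lemma sq_le : Real.sqrt (2 * Real.pi) ≤ 2.6 := by
  rw [Real.sqrt_le_left (by norm_num)]
  nlinarith [Real.pi_lt_d2]

lemma phi_eq (x : ℝ) : phi x = Real.exp (-(1/2) * x ^ 2) / Real.sqrt (2 * Real.pi) := by
  unfold phi; congr 2; ring

lemma phi_nonneg (x : ℝ) : 0 ≤ phi x := by unfold phi; positivity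

lemma phi_int : Integrable phi := by
  have : phi = fun x => Real.exp (-(1/2) * x ^ 2) / Real.sqrt (2 * Real.pi) := funext phi_eq
  rw [this]
  exact (integrable_exp_neg_mul_sq (by norm_num)).div_const _

lemma phi_total : ∫ x, phi x = 1 := by
  simp_rw [phi_eq]
  rw [integral_div, integral_gaussian]
  rw [show Real.pi / (1/2) = 2 * Real.pi by ring]
  exact div_self sq_pos.ne'

lemma phi_half : ∫ x in Set.Ioi (0:ℝ), phi x = 1 / 2 := by
  simp_rw [phi_eq]
  rw [integral_div, integral_gaussian_Ioi]
  rw [show Real.pi / (1/2) = 2 * Real.pi by ring]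
  have := sq_pos.ne'
  field_simp

lemma P_shift (x0 mu : ℝ) :
    ∫ x in Set.Ici x0, phi (x - mu) = ∫ x in Set.Ici (x0 - mu), phi x := by
  rw [← integral_indicator measurableSet_Ici, ← integral_indicator measurableSet_Ici,
    ← integral_sub_right_eq_self ((Set.Ici (x0 - mu)).indicator phi) mu]
  congr 1
  ext x
  simp [Set.indicator]

lemma P_ge (s : ℝ) (hs : 1 ≤ s) : 0.73 ≤ ∫ x in Set.Ici (-s), phi x := by
  have h1 : ∫ x in Set.Icc (-1:ℝ) 0 ∪ Set.Ioi 0, phi x ≤ ∫ x in Set.Ici (-s), phi x := by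
    apply setIntegral_mono_set phi_int.integrableOn
    · exact Filter.Eventually.of_forall phi_nonneg
    · apply Filter.Eventually.of_forall
      intro x hx
      rcases hx with hx | hx
      · obtain ⟨hx1, hx2⟩ := hx
        show -s ≤ x
        linarith
      · have hx1 : 0 < x := hx
        show -s ≤ x
        linarith
  rw [setIntegral_union (by
      rw [Set.disjoint_left]; intro x hx hx'; exact absurd hx.2 (not_le.2 hx'))
    measurableSet_Ioi phi_int.integrableOn phi_int.integrableOn, phi_half] at h1
  have h2 : ∫ x in Set.Icc (-1:ℝ) 0, (0.6/2.6 : ℝ) ≤ ∫ x in Set.Icc (-1:ℝ) 0, phi x := by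
    apply setIntegral_mono_on (by simp) phi_int.integrableOn measurableSet_Icc
    intro x hx
    unfold phi
    have he : (0.6:ℝ) ≤ Real.exp (-1/2) := by
      have h3 : Real.exp (-1/2) * Real.exp (-1/2) = Real.exp (-1) := by
        rw [← Real.exp_add]; norm_num
      have h4 : (0.36:ℝ) ≤ Real.exp (-1) := by
        have := Real.exp_neg_one_gt_d9; linarith
      nlinarith [Real.exp_pos (-1/2)]
    have he2 : Real.exp (-1/2) ≤ Real.exp (-x^2/2) := by
      apply Real.exp_le_exp.2
      nlinarith [hx.1, hx.2]
    exact div_le_div₀ (Real.exp_pos _).le (he.trans he2) sq_pos sq_le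
  simp at h2
  norm_num at h2 h1 ⊢
  linarith

lemma P_tail (s : ℝ) (hs : 0 ≤ s) :
    1 - Real.exp (-s ^ 2 / 2) ≤ ∫ x in Set.Ici (-s), phi x := by
  have h1 := integral_add_compl (measurableSet_Ici (a := -s)) phi_int
  rw [phi_total, Set.compl_Ici] at h1
  have hI : Integrable (fun x => Real.exp (-s^2/2) * phi (x + s)) :=
    (phi_int.comp_add_right s).const_mul _
  have h2 : ∫ x in Set.Iio (-s), phi x ≤ ∫ x in Set.Iio (-s), Real.exp (-s^2/2) * phi (x + s) := by
    apply setIntegral_mono_on phi_int.integrableOn hI.integrableOn measurableSet_Iio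
    intro x hx
    unfold phi
    rw [← mul_div_assoc, ← Real.exp_add]
    apply div_le_div_of_nonneg_right _ sq_pos.le
    apply Real.exp_le_exp.2
    have := Set.mem_Iio.1 hx
    nlinarith
  have h3 : ∫ x in Set.Iio (-s), Real.exp (-s^2/2) * phi (x + s)
      ≤ ∫ x, Real.exp (-s^2/2) * phi (x + s) := by
    apply setIntegral_le_integral hI
    exact Filter.Eventually.of_forall fun x => mul_nonneg (Real.exp_pos _).le (phi_nonneg _)
  have h4 : ∫ x, Real.exp (-s^2/2) * phi (x + s) = Real.exp (-s^2/2) := by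
    rw [integral_const_mul, integral_add_right_eq_self, phi_total, mul_one]
  rw [h4] at h3
  linarith

lemma prod_eq (m lam x : ℝ) :
    (stdGauss x) ^ (1 - lam) * (gaussAt m x) ^ lam
      = Real.exp (-(lam * (1 - lam) * m ^ 2) / 2) * phi (x - lam * m) := by
  unfold stdGauss gaussAt phi
  rw [Real.div_rpow (Real.exp_pos _).le sq_pos.le, Real.div_rpow (Real.exp_pos _).le sq_pos.le,
    ← Real.exp_mul, ← Real.exp_mul, div_mul_div_comm, ← Real.rpow_add sq_pos, ← Real.exp_add,
    ← mul_div_assoc, ← Real.exp_add]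
  congr 2
  · ring
  · rw [sub_add_cancel, Real.rpow_one]

lemma smUnif_int (m : ℝ) (hm : 10 ≤ m) : Integrable (smUnif m) := by
  unfold smUnif
  apply Integrable.div_const
  have hI : Integrable (fun x : ℝ => Real.exp (2 * m^2) * Real.exp (-(1/4) * x^2)) :=
    (integrable_exp_neg_mul_sq (by norm_num)).const_mul _
  refine hI.mono' ?_ ?_
  · apply Continuous.aestronglyMeasurable
    have := Metric.continuous_infDist_pt (Set.Icc (-m) (2*m))
    fun_prop
  · refine Filter.Eventually.of_forall fun x => ?_
    rw [Real.norm_of_nonneg (Real.exp_pos _).le, ← Real.exp_add]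
    apply Real.exp_le_exp.2
    obtain ⟨y, hy, hxy⟩ := (isCompact_Icc (a := -m) (b := 2*m)).exists_infDist_eq_dist
      ⟨0, by constructor <;> linarith⟩ x
    rw [hxy, Real.dist_eq, sq_abs]
    have hy2 : y^2 ≤ 4 * m^2 := by nlinarith [hy.1, hy.2]
    nlinarith [sq_nonneg (x - 2*y)]

lemma smUnif_pos (m x : ℝ) (hm : 10 ≤ m) : 0 < smUnif m x := by
  unfold smUnif; have := sq_pos; positivity

lemma gaussAt_pos (m x : ℝ) : 0 < gaussAt m x := by
  unfold gaussAt; positivity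

lemma stdGauss_pos (x : ℝ) : 0 < stdGauss x := by
  unfold stdGauss; positivity

lemma pi_int (m a : ℝ) (hm : 10 ≤ m) : Integrable (piDensA m a) := by
  unfold piDensA
  exact ((phi_int.comp_sub_right m).const_mul _).add ((smUnif_int m hm).const_mul _)

lemma pi_nonneg (m a x : ℝ) (hm : 10 ≤ m) : 0 ≤ piDensA m a x := by
  unfold piDensA
  have h1 : Real.exp (-(a ^ 2 * m ^ 2) / 2) ≤ 1 := by
    apply Real.exp_le_one_iff.2
    have : 0 ≤ a^2*m^2 := by positivity
    linarith
  have := mul_nonneg (sub_nonneg.2 h1) (gaussAt_pos m x).le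
  have := mul_nonneg (Real.exp_pos (-(a ^ 2 * m ^ 2) / 2)).le (smUnif_pos m x hm).le
  linarith

lemma F_int (m a lam : ℝ) (hm : 10 ≤ m) (h0 : 0 ≤ lam) (h1 : lam ≤ 1) :
    Integrable (fun x => (stdGauss x) ^ (1 - lam) * (piDensA m a x) ^ lam) := by
  have hs : Integrable stdGauss := phi_int
  have hI : Integrable (fun x => (1 - lam) * stdGauss x + lam * piDensA m a x) :=
    (hs.const_mul _).add ((pi_int m a hm).const_mul _)
  refine hI.mono' ?_ ?_
  · have a1 := hs.aestronglyMeasurable.aemeasurable.pow_const (1 - lam)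
    have a2 := (pi_int m a hm).aestronglyMeasurable.aemeasurable.pow_const lam
    exact (a1.mul a2).aestronglyMeasurable
  · refine Filter.Eventually.of_forall fun x => ?_
    have p1 := (stdGauss_pos x).le
    have p2 := pi_nonneg m a x hm
    rw [Real.norm_of_nonneg (mul_nonneg (Real.rpow_nonneg p1 _) (Real.rpow_nonneg p2 _))]
    exact Real.geom_mean_le_arith_mean2_weighted (by linarith) h0 p1 p2 (by ring)

lemma log_bd (m : ℝ) (hm : 10 ≤ m) : Real.log (3*m+3) ≤ 3 + (m+1)/11 := by
  have h1 : Real.log (3*m+3) = Real.log 33 + Real.log ((m+1)/11) := by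
    rw [← Real.log_mul (by norm_num) (by positivity)]
    congr 1; ring
  have h2 : Real.log 33 ≤ 4 := by
    rw [Real.log_le_iff_le_exp (by norm_num)]
    have : Real.exp 4 = (Real.exp 1)^4 := by rw [← Real.exp_nat_mul]; norm_num
    rw [this]
    have h3 : (2.7:ℝ)^4 ≤ (Real.exp 1)^4 := by
      gcongr
      linarith [Real.exp_one_gt_d9]
    norm_num at h3 ⊢
    linarith
  have h3 := Real.log_le_sub_one_of_pos (show 0 < (m+1)/11 by positivity)
  linarith

lemma K_bd (m lam x0 x : ℝ) (hm : 10 ≤ m) (h0 : 1/2 ≤ lam) (h1 : lam ≤ 1)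
    (hx0 : 0 ≤ x0) (hx0m : x0 ≤ m / 2) (hx : x ∈ Set.Icc x0 (x0+1)) :
    Real.exp (-(lam * (1 - lam) * m ^ 2) / 2) * Real.exp (-(lam*m - x0)^2/2)
      ≤ (stdGauss x) ^ (1 - lam) * (smUnif m x) ^ lam := by
  obtain ⟨hx1, hx2⟩ := hx
  have hsm : smUnif m x = 1 / (3 * m + Real.sqrt (2 * Real.pi)) := by
    unfold smUnif
    have hmem : x ∈ Set.Icc (-m) (2 * m) := ⟨by linarith, by linarith⟩
    rw [Metric.infDist_zero_of_mem hmem]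
    simp
  have l1 : -(x0+1)^2/2 - 1 ≤ Real.log (stdGauss x) := by
    unfold stdGauss
    rw [Real.log_div (Real.exp_pos _).ne' sq_pos.ne', Real.log_exp]
    have : Real.log (Real.sqrt (2*Real.pi)) ≤ 1 := by
      rw [Real.log_le_iff_le_exp sq_pos]
      linarith [sq_le, Real.exp_one_gt_d9]
    nlinarith
  have l2 : -(3 + (m+1)/11) ≤ Real.log (smUnif m x) := by
    rw [hsm, one_div, Real.log_inv]
    have := Real.log_le_log (show 0 < 3 * m + Real.sqrt (2 * Real.pi) by positivity)
      (show 3 * m + Real.sqrt (2 * Real.pi) ≤ 3*m+3 by linarith [sq_le])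
    linarith [log_bd m hm]
  rw [Real.rpow_def_of_pos (stdGauss_pos x), Real.rpow_def_of_pos (smUnif_pos m x hm),
    ← Real.exp_add, ← Real.exp_add]
  apply Real.exp_le_exp.2
  have k1 := mul_le_mul_of_nonneg_right l1 (show 0 ≤ 1 - lam by linarith)
  have k2 := mul_le_mul_of_nonneg_right l2 (show 0 ≤ lam by linarith)
  have k3 : x0 + 3/2 + (3 + (m+1)/11) ≤ (m-x0)^2/2 := by nlinarith
  have k4 := mul_le_mul_of_nonneg_right k3 (show 0 ≤ lam by linarith)
  have k5 : (1 - lam) * (x0 + 3/2) ≤ lam * (x0 + 3/2) :=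
    mul_le_mul_of_nonneg_right (by linarith) (by linarith)
  refine le_trans ?_ (add_le_add k1 k2)
  nlinarith

end UTaux

open UTaux in
/-- For m ≥ 10, a ∈ [√(2 log 2)/m, 1] and λ ∈ [0,1] with
1 ≤ a + 2λ − 2/m, we have ∫_{m(1−a)/2}^{∞} ν^{1−λ}π^λ ≥ (1/2)e^{−λ(1−λ)m²/2}. -/
theorem unimodal_tempering_right_unnormalized_mass_lower_bound
    (m a : ℝ) (hm : 10 ≤ m)
    (ha : a ∈ Set.Icc (Real.sqrt (2 * Real.log 2) / m) 1)
    (lam : ℝ) (hlam : lam ∈ Set.Icc (0 : ℝ) 1)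
    (hcond : 1 ≤ a + 2 * lam - 2 / m) :
    (1 / 2) * Real.exp (-(lam * (1 - lam) * m ^ 2) / 2)
      ≤ ∫ x in Set.Ici (m * (1 - a) / 2),
          (stdGauss x) ^ (1 - lam) * (piDensA m a x) ^ lam := by
  obtain ⟨ha0, ha1⟩ := ha
  obtain ⟨hl0, hl1⟩ := hlam
  have hmp : 0 < m := by linarith
  set x0 := m * (1 - a) / 2 with hx0
  set E := Real.exp (-(lam * (1 - lam) * m ^ 2) / 2) with hE
  set e := Real.exp (-(a ^ 2 * m ^ 2) / 2) with he
  have hEp : 0 < E := Real.exp_pos _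
  have hep : 0 < e := Real.exp_pos _
  have ham : Real.sqrt (2 * Real.log 2) ≤ a * m := (div_le_iff₀ hmp).1 ha0
  have hlog2 : 0 < Real.log 2 := Real.log_pos (by norm_num)
  have ha2 : 2 * Real.log 2 ≤ a ^ 2 * m ^ 2 := by
    have := (Real.sqrt_le_left ((Real.sqrt_nonneg _).trans ham)).1 ham
    linarith [mul_pow a m 2]
  have hapos : 0 ≤ a := le_trans (by positivity) ha0
  have he2 : e ≤ 1 / 2 := by
    rw [he, ← Real.le_log_iff_exp_le (by norm_num), one_div, Real.log_inv]
    linarith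
  have hx00 : 0 ≤ x0 := by rw [hx0]; have : 0 ≤ m * (1 - a) := mul_nonneg hmp.le (by linarith)
                           linarith
  have hx0m : x0 ≤ m / 2 := by rw [hx0]; nlinarith
  have hs : 1 ≤ lam * m - x0 := by
    have := mul_le_mul_of_nonneg_left hcond hmp.le
    have h2 : m * (a + 2 * lam - 2 / m) = m * a + 2 * lam * m - 2 := by field_simp
    rw [h2] at this
    rw [hx0]; linarith
  have hP1 := P_ge _ hs
  have hP2 := P_tail _ (show 0 ≤ lam * m - x0 by linarith)
  have hsh := P_shift x0 (lam * m)
  rw [neg_sub, ← hsh] at hP1 hP2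
  set P := ∫ x in Set.Ici x0, phi (x - lam * m) with hP
  have hF := F_int m a lam hm hl0 hl1
  have hphi : Integrable (fun x => phi (x - lam * m)) := phi_int.comp_sub_right _
  have hpt : ∀ x, piDensA m a x = (1 - e) * gaussAt m x + e * smUnif m x := fun x => rfl
  rcases le_total lam (1/2) with hl | hl
  · have hb : ∫ x in Set.Ici x0, ((0.7 * E) * phi (x - lam * m)) ≤
        ∫ x in Set.Ici x0, (stdGauss x) ^ (1 - lam) * (piDensA m a x) ^ lam := by
      apply setIntegral_mono (hphi.const_mul _).integrableOn hF.integrableOn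
      intro x
      have g0 := (gaussAt_pos m x)
      have h1 : (1/2) * gaussAt m x ≤ piDensA m a x := by
        rw [hpt]
        nlinarith [smUnif_pos m x hm, mul_pos hep (smUnif_pos m x hm)]
      have h2 : ((1/2) * gaussAt m x) ^ lam ≤ piDensA m a x ^ lam :=
        Real.rpow_le_rpow (by positivity) h1 hl0
      rw [Real.mul_rpow (by norm_num) g0.le] at h2
      have h3 : (0.7:ℝ) ≤ (1/2 : ℝ) ^ lam := by
        have h4 : (1/2 : ℝ) ^ (1/2 : ℝ) ≤ (1/2 : ℝ) ^ lam :=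
          Real.rpow_le_rpow_of_exponent_ge (by norm_num) (by norm_num) hl
        refine le_trans ?_ h4
        rw [← Real.sqrt_eq_rpow]
        apply Real.le_sqrt_of_sq_le
        norm_num
      have h5 : 0.7 * gaussAt m x ^ lam ≤ piDensA m a x ^ lam :=
        (mul_le_mul_of_nonneg_right h3 (Real.rpow_nonneg g0.le _)).trans h2
      have h6 := mul_le_mul_of_nonneg_left h5 (Real.rpow_nonneg (stdGauss_pos x).le (1 - lam))
      have h7 := prod_eq m lam x
      calc 0.7 * E * phi (x - lam * m) = 0.7 * (E * phi (x - lam * m)) := by ring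
        _ = stdGauss x ^ (1 - lam) * (0.7 * gaussAt m x ^ lam) := by rw [← h7]; ring
        _ ≤ _ := h6
    rw [integral_const_mul, ← hP] at hb
    refine le_trans ?_ hb
    nlinarith
  · set K := E * Real.exp (-(lam*m - x0)^2/2) with hK
    have hKp : 0 < K := by positivity
    have hind : Integrable ((Set.Icc x0 (x0+1)).indicator (fun _ : ℝ => e * K)) := by
      rw [integrable_indicator_iff measurableSet_Icc]
      exact integrableOn_const (by simp)
    have hb : ∫ x in Set.Ici x0, (((1 - e) * E) * phi (x - lam * m)
          + (Set.Icc x0 (x0+1)).indicator (fun _ : ℝ => e * K) x) ≤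
        ∫ x in Set.Ici x0, (stdGauss x) ^ (1 - lam) * (piDensA m a x) ^ lam := by
      apply setIntegral_mono ((hphi.const_mul _).add hind).integrableOn hF.integrableOn
      intro x
      have g0 := (gaussAt_pos m x).le
      have u0 := (smUnif_pos m x hm).le
      have n0 := Real.rpow_nonneg (stdGauss_pos x).le (1 - lam)
      have hc : (1 - e) * gaussAt m x ^ lam + e * smUnif m x ^ lam ≤ piDensA m a x ^ lam := by
        have := (Real.concaveOn_rpow hl0 hl1).2 (Set.mem_Ici.2 g0) (Set.mem_Ici.2 u0)
          (show 0 ≤ 1 - e by linarith) hep.le (by ring)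
        simpa [hpt] using this
      have h6 := mul_le_mul_of_nonneg_left hc n0
      have h7 := prod_eq m lam x
      have h8 : (Set.Icc x0 (x0+1)).indicator (fun _ : ℝ => e * K) x
          ≤ e * (stdGauss x ^ (1 - lam) * smUnif m x ^ lam) := by
        by_cases hx : x ∈ Set.Icc x0 (x0+1)
        · rw [Set.indicator_of_mem hx]
          exact mul_le_mul_of_nonneg_left (K_bd m lam x0 x hm hl hl1 hx00 hx0m hx) hep.le
        · rw [Set.indicator_of_notMem hx]
          have := Real.rpow_nonneg u0 lam
          positivity
      calc _ ≤ (1 - e) * (E * phi (x - lam * m))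
            + e * (stdGauss x ^ (1 - lam) * smUnif m x ^ lam) := by
              exact add_le_add (le_of_eq (mul_assoc _ _ _)) h8
        _ = stdGauss x ^ (1 - lam) * ((1 - e) * gaussAt m x ^ lam + e * smUnif m x ^ lam) := by
              rw [← h7]; ring
        _ ≤ _ := h6
    rw [integral_add (hphi.const_mul _).integrableOn hind.integrableOn, integral_const_mul, ← hP,
      setIntegral_indicator measurableSet_Icc,
      Set.inter_eq_right.2 (fun x hx => Set.mem_Ici.2 hx.1)] at hb
    simp at hb
    refine le_trans ?_ hb
    have h9 : E * (1 - P) ≤ K := mul_le_mul_of_nonneg_left (by linarith) hEp.le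
    have h10 := mul_le_mul_of_nonneg_left h9 hep.le
    have h11 : 0 ≤ E * ((1/2 - e) * (2 * P - 1)) :=
      mul_nonneg hEp.le (mul_nonneg (by linarith) (by norm_num at hP1; linarith))
    nlinarith
end
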